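/- arXiv:2408.15094 — 10 statements merged into one kernel-verified Lean document; each statement's English description precedes it below -/
import Mathlib

section
/- Let q, q¹, …, qᵐ be probability measures on a measurable space X and b ∈ ℝᵐ. Assume the Slater condition: there exist a probability measure p̂ on X and ζ > 0 with KL(qⁱ‖p̂) ≤ bᵢ − ζ for all i = 1, …, m. Then strong duality holds: F* = D*, where F* = inf{KL(q‖p) : p a probability measure on X with KL(qⁱ‖p) ≤ bᵢ for all i} and D* = sup_{λ ∈ ℝ₊ᵐ} g(λ) with g(λ) = inf over probability measures p of L(p, λ), L(p, λ) = KL(q‖p) + Σᵢ λᵢ (KL(qⁱ‖p) − bᵢ). Moreover the supremum defining D* is attained at some λ* ∈ ℝ₊ᵐ. -/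
open MeasureTheory

/-- The Kullback–Leibler divergence `KL(μ‖ν)`, with values in `EReal`. -/
noncomputable def KL {X : Type*} [MeasurableSpace X] (μ ν : Measure X) : EReal :=
  open Classical in
  if μ ≪ ν ∧ Integrable (llr μ ν) μ then ((∫ x, llr μ ν x ∂μ : ℝ) : EReal) else ⊤

/-- The Lagrangian `L(p, λ) = KL(q‖p) + ∑ i, λ i * (KL(qⁱ‖p) − b i)` of the KL-constrained
problem. -/
noncomputable def Lagrangian {X : Type*} [MeasurableSpace X] {m : ℕ}
    (q : Measure X) (qi : Fin m → Measure X) (b : Fin m → ℝ)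
    (p : Measure X) (l : Fin m → ℝ) : EReal :=
  KL q p + ∑ i, (l i : EReal) * (KL (qi i) p - (b i : EReal))

/-- The dual function `g(λ) = inf over probability measures p of L(p, λ)`. -/
noncomputable def dualFn {X : Type*} [MeasurableSpace X] {m : ℕ}
    (q : Measure X) (qi : Fin m → Measure X) (b : Fin m → ℝ) (l : Fin m → ℝ) : EReal :=
  ⨅ p : {p : Measure X // IsProbabilityMeasure p}, Lagrangian q qi b p.1 l

/-- Finiteness of the divergence. -/
def FinKL {X : Type*} [MeasurableSpace X] (μ ν : Measure X) : Prop :=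
  μ ≪ ν ∧ Integrable (llr μ ν) μ

/-- Real value of the divergence. -/
noncomputable def rKL {X : Type*} [MeasurableSpace X] (μ ν : Measure X) : ℝ :=
  ∫ x, llr μ ν x ∂μ

/-- Mixture of two measures. -/
noncomputable def mixM {X : Type*} [MeasurableSpace X] (s t : ℝ) (ν₁ ν₂ : Measure X) :
    Measure X := s.toNNReal • ν₁ + t.toNNReal • ν₂

section aux
variable {X : Type*} [MeasurableSpace X]

lemma KL_of_fin {μ ν : Measure X} (h : FinKL μ ν) : KL μ ν = (rKL μ ν : EReal) := by
  unfold KL rKL; exact if_pos h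

lemma KL_of_not_fin {μ ν : Measure X} (h : ¬ FinKL μ ν) : KL μ ν = ⊤ := by
  unfold KL; exact if_neg h

lemma fin_of_KL_le {μ ν : Measure X} {c : ℝ} (h : KL μ ν ≤ (c : EReal)) :
    FinKL μ ν ∧ rKL μ ν ≤ c := by
  by_cases hf : FinKL μ ν
  · rw [KL_of_fin hf] at h
    exact ⟨hf, by exact_mod_cast h⟩
  · rw [KL_of_not_fin hf] at h
    exact absurd (top_le_iff.mp h) (EReal.coe_ne_top c)

lemma rKL_nonneg {μ ν : Measure X} [IsProbabilityMeasure μ] [IsProbabilityMeasure ν]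
    (h : FinKL μ ν) : 0 ≤ rKL μ ν := by
  have := InformationTheory.integral_llr_add_sub_measure_univ_nonneg h.1 h.2
  simpa [rKL] using this

lemma KL_nonneg {μ ν : Measure X} [IsProbabilityMeasure μ] [IsProbabilityMeasure ν] :
    0 ≤ KL μ ν := by
  by_cases hf : FinKL μ ν
  · rw [KL_of_fin hf]; exact_mod_cast rKL_nonneg hf
  · rw [KL_of_not_fin hf]; exact le_top

lemma mixM_prob {s t : ℝ} (hs : 0 ≤ s) (ht : 0 ≤ t) (hst : s + t = 1) (ν₁ ν₂ : Measure X)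
    [IsProbabilityMeasure ν₁] [IsProbabilityMeasure ν₂] :
    IsProbabilityMeasure (mixM s t ν₁ ν₂) := by
  constructor
  simp only [mixM, Measure.add_apply, Measure.smul_apply, measure_univ]
  simp only [ENNReal.smul_def, smul_eq_mul, mul_one]
  rw [← ENNReal.coe_add, ← Real.toNNReal_add hs ht, hst]; simp

lemma fin_of_le {μ ν : Measure X} [IsProbabilityMeasure μ] [IsProbabilityMeasure ν]
    (hac : μ ≪ ν) {g : X → ℝ} (hg : Integrable g μ) (hle : ∀ᵐ x ∂μ, g x ≤ llr ν μ x) :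
    FinKL μ ν ∧ rKL μ ν ≤ - ∫ x, g x ∂μ := by
  have hup : ∀ᵐ x ∂μ, llr ν μ x ≤ (ν.rnDeriv μ x).toReal := by
    refine ae_of_all _ fun x => ?_
    rw [llr]
    exact Real.log_le_self ENNReal.toReal_nonneg
  have hint : Integrable (llr ν μ) μ :=
    integrable_of_le_of_le (stronglyMeasurable_llr ν μ).aestronglyMeasurable hle hup hg
      Measure.integrable_toReal_rnDeriv
  have hneg := neg_llr hac
  have hint2 : Integrable (llr μ ν) μ := by
    have : Integrable (-llr μ ν) μ := (integrable_congr hneg).mpr hint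
    simpa using this.neg
  refine ⟨⟨hac, hint2⟩, ?_⟩
  have h1 : rKL μ ν = - ∫ x, llr ν μ x ∂μ := by
    rw [← integral_congr_ae hneg]
    simp [rKL, integral_neg]
  rw [h1]
  exact neg_le_neg (integral_mono_ae hg hint hle)

lemma mix_rn {s t : ℝ} (hs : 0 ≤ s) (ht : 0 ≤ t) (μ ν₁ ν₂ : Measure X)
    [IsProbabilityMeasure μ] [IsProbabilityMeasure ν₁] [IsProbabilityMeasure ν₂] :
    ∀ᵐ x ∂μ, ((mixM s t ν₁ ν₂).rnDeriv μ x).toReal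
      = s * (ν₁.rnDeriv μ x).toReal + t * (ν₂.rnDeriv μ x).toReal := by
  have h1 := Measure.rnDeriv_add (s.toNNReal • ν₁) (t.toNNReal • ν₂) μ
  have h2 := Measure.rnDeriv_smul_left ν₁ μ s.toNNReal
  have h3 := Measure.rnDeriv_smul_left ν₂ μ t.toNNReal
  filter_upwards [h1, h2, h3, ν₁.rnDeriv_lt_top μ, ν₂.rnDeriv_lt_top μ] with x a1 a2 a3 a4 a5
  rw [mixM, a1, Pi.add_apply, a2, a3, Pi.smul_apply, Pi.smul_apply, ENNReal.smul_def,
    ENNReal.smul_def, smul_eq_mul, smul_eq_mul, ENNReal.toReal_add, ENNReal.toReal_mul,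
    ENNReal.toReal_mul]
  · simp [hs, ht]
  · exact ENNReal.mul_ne_top ENNReal.coe_ne_top a4.ne
  · exact ENNReal.mul_ne_top ENNReal.coe_ne_top a5.ne

lemma rn_pos {μ ν : Measure X} [IsProbabilityMeasure μ] [IsProbabilityMeasure ν]
    (h : μ ≪ ν) : ∀ᵐ x ∂μ, 0 < (ν.rnDeriv μ x).toReal := by
  filter_upwards [Measure.rnDeriv_pos' h, ν.rnDeriv_lt_top μ] with x h1 h2
  exact ENNReal.toReal_pos h1.ne' h2.ne

lemma ac_mix {s t : ℝ} (hs : 0 < s) {μ ν₁ ν₂ : Measure X} (h : μ ≪ ν₁) :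
    μ ≪ mixM s t ν₁ ν₂ := by
  have h0 : (s.toNNReal : ENNReal) ≠ 0 := by simpa using hs
  have : μ ≪ s.toNNReal • ν₁ := h.smul_right h0
  exact this.add_right _

lemma int_llr_swap {μ ν : Measure X} [IsProbabilityMeasure μ] [IsProbabilityMeasure ν]
    (h : FinKL μ ν) : Integrable (llr ν μ) μ ∧ ∫ x, llr ν μ x ∂μ = - rKL μ ν := by
  have hneg := neg_llr h.1
  refine ⟨(integrable_congr hneg).mp h.2.neg, ?_⟩
  rw [← integral_congr_ae hneg]
  simp [rKL, integral_neg]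

lemma mix_scale {s t : ℝ} (hs : 0 < s) (ht : 0 ≤ t) (hst : s + t = 1) {μ ν₁ ν₂ : Measure X}
    [IsProbabilityMeasure μ] [IsProbabilityMeasure ν₁] [IsProbabilityMeasure ν₂]
    (h : FinKL μ ν₁) :
    FinKL μ (mixM s t ν₁ ν₂) ∧ rKL μ (mixM s t ν₁ ν₂) ≤ rKL μ ν₁ - Real.log s := by
  have := mixM_prob hs.le ht hst ν₁ ν₂
  obtain ⟨hi, he⟩ := int_llr_swap h
  have key := fin_of_le (ν := mixM s t ν₁ ν₂) (ac_mix hs h.1)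
    (g := fun x => Real.log s + llr ν₁ μ x) ((integrable_const _).add hi) (by
      filter_upwards [mix_rn hs.le ht μ ν₁ ν₂, rn_pos h.1] with x h1 h2
      simp only [llr]
      rw [h1, ← Real.log_mul hs.ne' h2.ne']
      apply Real.log_le_log (by positivity)
      have : 0 ≤ t * (ν₂.rnDeriv μ x).toReal := by positivity
      linarith)
  refine ⟨key.1, key.2.trans_eq ?_⟩
  rw [integral_add (integrable_const _) hi, he]
  simp; ring

lemma mix_scale' {s t : ℝ} (hs : 0 ≤ s) (ht : 0 < t) (hst : s + t = 1) {μ ν₁ ν₂ : Measure X}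
    [IsProbabilityMeasure μ] [IsProbabilityMeasure ν₁] [IsProbabilityMeasure ν₂]
    (h : FinKL μ ν₂) :
    FinKL μ (mixM s t ν₁ ν₂) ∧ rKL μ (mixM s t ν₁ ν₂) ≤ rKL μ ν₂ - Real.log t := by
  have e : mixM s t ν₁ ν₂ = mixM t s ν₂ ν₁ := by simp [mixM, add_comm]
  rw [e]
  exact mix_scale ht hs (by linarith) h

lemma mix_convex {s t : ℝ} (hs : 0 < s) (ht : 0 < t) (hst : s + t = 1) {μ ν₁ ν₂ : Measure X}
    [IsProbabilityMeasure μ] [IsProbabilityMeasure ν₁] [IsProbabilityMeasure ν₂]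
    (h : FinKL μ ν₁) (h' : FinKL μ ν₂) :
    FinKL μ (mixM s t ν₁ ν₂) ∧ rKL μ (mixM s t ν₁ ν₂) ≤ s * rKL μ ν₁ + t * rKL μ ν₂ := by
  have := mixM_prob hs.le ht.le hst ν₁ ν₂
  obtain ⟨hi, he⟩ := int_llr_swap h
  obtain ⟨hi', he'⟩ := int_llr_swap h'
  have key := fin_of_le (ν := mixM s t ν₁ ν₂) (ac_mix hs h.1)
    (g := fun x => s * llr ν₁ μ x + t * llr ν₂ μ x) ((hi.const_mul s).add (hi'.const_mul t)) (by
      filter_upwards [mix_rn hs.le ht.le μ ν₁ ν₂, rn_pos h.1, rn_pos h'.1] with x h1 h2 h3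
      simp only [llr]
      rw [h1]
      have := strictConcaveOn_log_Ioi.concaveOn.2 h2 h3 hs.le ht.le hst
      simpa using this)
  refine ⟨key.1, key.2.trans_eq ?_⟩
  rw [integral_add (hi.const_mul s) (hi'.const_mul t), integral_const_mul, integral_const_mul,
    he, he']
  ring

/-- Abstract Lagrange multiplier on the set of measures with all divergences finite. -/
lemma exists_mult {m : ℕ} (q : Measure X) [IsProbabilityMeasure q]
    (qi : Fin m → Measure X) (hqi : ∀ i, IsProbabilityMeasure (qi i)) (b : Fin m → ℝ)
    (p0 : Measure X) (hp0 : IsProbabilityMeasure p0) (hq0 : FinKL q p0)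
    (hi0 : ∀ i, FinKL (qi i) p0) (hlt : ∀ i, rKL (qi i) p0 < b i) (F : ℝ)
    (hF : ∀ p : Measure X, IsProbabilityMeasure p → FinKL q p → (∀ i, FinKL (qi i) p) →
      (∀ i, rKL (qi i) p ≤ b i) → F ≤ rKL q p) :
    ∃ l : Fin m → ℝ, (∀ i, 0 ≤ l i) ∧ ∀ p : Measure X, IsProbabilityMeasure p → FinKL q p →
      (∀ i, FinKL (qi i) p) → F ≤ rKL q p + ∑ i, l i * (rKL (qi i) p - b i) := by
  let A : Set ((Fin m → ℝ) × ℝ) := {z | ∃ p : Measure X, IsProbabilityMeasure p ∧ FinKL q p ∧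
    (∀ i, FinKL (qi i) p) ∧ rKL q p < z.2 ∧ ∀ i, rKL (qi i) p - b i < z.1 i}
  have hA : IsOpen A := by
    rw [isOpen_iff_forall_mem_open]
    rintro z ⟨p, h1, h2, h3, h4, h5⟩
    refine ⟨{z | rKL q p < z.2} ∩ ⋂ i, {z | rKL (qi i) p - b i < z.1 i}, ?_, ?_, ?_⟩
    · rintro w ⟨hw1, hw2⟩
      exact ⟨p, h1, h2, h3, hw1, fun i => Set.mem_iInter.mp hw2 i⟩
    · refine IsOpen.inter (isOpen_lt (by fun_prop) (by fun_prop))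
        (isOpen_iInter_of_finite fun i => isOpen_lt (by fun_prop) (by fun_prop))
    · exact ⟨h4, Set.mem_iInter.mpr h5⟩
  have hAc : Convex ℝ A := by
    rw [convex_iff_forall_pos]
    rintro z ⟨p, h1, h2, h3, h4, h5⟩ w ⟨p', h1', h2', h3', h4', h5'⟩ s t hs ht hst
    refine ⟨mixM s t p p', mixM_prob hs.le ht.le hst p p', (mix_convex hs ht hst h2 h2').1,
      fun i => (mix_convex hs ht hst (h3 i) (h3' i)).1, ?_, fun i => ?_⟩
    · have := (mix_convex hs ht hst h2 h2').2
      have a1 := mul_lt_mul_of_pos_left h4 hs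
      have a2 := mul_lt_mul_of_pos_left h4' ht
      simp only [Prod.snd_add, Prod.smul_snd, smul_eq_mul]
      linarith
    · have := (mix_convex hs ht hst (h3 i) (h3' i)).2
      have a1 := mul_lt_mul_of_pos_left (h5 i) hs
      have a2 := mul_lt_mul_of_pos_left (h5' i) ht
      simp only [Prod.fst_add, Prod.smul_fst, Pi.add_apply, Pi.smul_apply, smul_eq_mul]
      have e : b i = s * b i + t * b i := by rw [← add_mul, hst, one_mul]
      linarith
  have hnot : ((0 : Fin m → ℝ), F) ∉ A := by
    rintro ⟨p, h1, h2, h3, h4, h5⟩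
    have := hF p h1 h2 h3 (fun i => by have := h5 i; simp at this; linarith)
    simp at h4; linarith
  obtain ⟨f, hf⟩ := geometric_hahn_banach_point_open hAc hA hnot
  set c := f (0, 1) with hc
  let l : Fin m → ℝ := fun i => f (Pi.single i 1, 0)
  have hform : ∀ u r, f (u, r) = ∑ i, u i * l i + r * c := by
    intro u r
    have e : ((u, r) : (Fin m → ℝ) × ℝ)
        = ∑ i, u i • ((Pi.single i 1 : Fin m → ℝ), (0:ℝ)) + r • ((0 : Fin m → ℝ), (1:ℝ)) := by
      ext j
      · simp [Prod.fst_sum, Finset.sum_apply, Pi.single_apply]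
      · simp [Prod.snd_sum]
    rw [e, map_add, map_sum, map_smul]
    simp only [map_smul, smul_eq_mul]
    rfl
  have hl : ∀ i, 0 ≤ l i := by
    intro i
    by_contra hneg
    push Not at hneg
    have hmem : ∀ K : ℝ, 0 ≤ K → ((fun j => K * (Pi.single i (1:ℝ) : Fin m → ℝ) j),
        rKL q p0 + 1) ∈ A := by
      intro K hK
      refine ⟨p0, hp0, hq0, hi0, by simp, fun j => ?_⟩
      have h1 := hlt j
      have h2 : 0 ≤ K * (Pi.single i (1:ℝ) : Fin m → ℝ) j := by
        apply mul_nonneg hK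
        by_cases h : j = i
        · subst h; simp
        · simp [h]
      simp only
      linarith
    have hineq : ∀ K : ℝ, 0 ≤ K → F * c < K * l i + (rKL q p0 + 1) * c := by
      intro K hK
      have := hf _ (hmem K hK)
      rw [hform, hform] at this
      simpa [Pi.single_apply] using this
    have h0 := hineq 0 le_rfl
    have h1 := hineq (((rKL q p0 + 1) * c - F * c) / (- l i))
      (div_nonneg (by linarith) (by linarith))
    have e : ((rKL q p0 + 1) * c - F * c) / (- l i) * l i = - ((rKL q p0 + 1) * c - F * c) := by
      have hne : l i ≠ 0 := hneg.ne
      field_simp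
    rw [e] at h1
    linarith
  have hcpos : 0 < c := by
    have hm : ((0 : Fin m → ℝ), rKL q p0 + 1) ∈ A :=
      ⟨p0, hp0, hq0, hi0, by simp, fun j => by simpa using hlt j⟩
    have := hf _ hm
    rw [hform, hform] at this
    simp at this
    have h2 := hF p0 hp0 hq0 hi0 (fun i => (hlt i).le)
    by_contra hc'
    push Not at hc'
    nlinarith
  refine ⟨fun i => l i / c, fun i => div_nonneg (hl i) hcpos.le, fun p h1 h2 h3 => ?_⟩
  have hε : ∀ ε : ℝ, 0 < ε → F * c ≤ (∑ i, (rKL (qi i) p - b i) * l i + rKL q p * c)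
      + ε * (∑ i, l i + c) := by
    intro ε hε
    have hm : ((fun i => rKL (qi i) p - b i + ε), rKL q p + ε) ∈ A :=
      ⟨p, h1, h2, h3, by simpa using hε, fun j => by simpa using hε⟩
    have := hf _ hm
    rw [hform, hform] at this
    simp only [Pi.zero_apply, zero_mul, Finset.sum_const_zero, zero_add] at this
    refine this.le.trans_eq ?_
    simp only [add_mul _ ε, Finset.sum_add_distrib, ← Finset.mul_sum]
    ring
  have hle : F * c ≤ ∑ i, (rKL (qi i) p - b i) * l i + rKL q p * c := by
    have hS : 0 < ∑ i, l i + c := add_pos_of_nonneg_of_pos (Finset.sum_nonneg fun i _ => hl i) hcpos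
    refine le_of_forall_pos_le_add fun δ hδ => ?_
    have := hε (δ / (∑ i, l i + c)) (div_pos hδ hS)
    rwa [div_mul_cancel₀ _ hS.ne'] at this
  have : (rKL q p + ∑ i, l i / c * (rKL (qi i) p - b i)) * c
      = ∑ i, (rKL (qi i) p - b i) * l i + rKL q p * c := by
    rw [add_mul, Finset.sum_mul, add_comm]
    congr 1
    refine Finset.sum_congr rfl fun i _ => ?_
    field_simp
  rw [← this] at hle
  exact le_of_mul_le_mul_right hle hcpos

/-- Extension of the multiplier inequality to all probability measures. -/
lemma le_lag {m : ℕ} (q : Measure X) [IsProbabilityMeasure q]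
    (qi : Fin m → Measure X) (hqi : ∀ i, IsProbabilityMeasure (qi i)) (b : Fin m → ℝ)
    (p0 : Measure X) (hp0 : IsProbabilityMeasure p0) (hq0 : FinKL q p0)
    (hi0 : ∀ i, FinKL (qi i) p0) (F : ℝ) (l : Fin m → ℝ) (hl : ∀ i, 0 ≤ l i)
    (h : ∀ p : Measure X, IsProbabilityMeasure p → FinKL q p →
      (∀ i, FinKL (qi i) p) → F ≤ rKL q p + ∑ i, l i * (rKL (qi i) p - b i))
    (p : Measure X) (hp : IsProbabilityMeasure p) : (F : EReal) ≤ Lagrangian q qi b p l := by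
  unfold Lagrangian
  have hterm : ∀ i, ¬ FinKL (qi i) p → l i ≠ 0 →
      (l i : EReal) * (KL (qi i) p - (b i : EReal)) = ⊤ := by
    intro i h1 h2
    rw [KL_of_not_fin h1, EReal.top_sub_coe]
    exact EReal.coe_mul_top_of_pos (lt_of_le_of_ne (hl i) (Ne.symm h2))
  have hreal : ∀ i, (FinKL (qi i) p ∨ l i = 0) →
      (l i : EReal) * (KL (qi i) p - (b i : EReal))
        = ((l i * (rKL (qi i) p - b i) : ℝ) : EReal) := by
    rintro i (h1 | h1)
    · rw [KL_of_fin h1]; push_cast; rfl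
    · simp [h1]
  have hnb : ∀ i, (l i : EReal) * (KL (qi i) p - (b i : EReal)) ≠ ⊥ := by
    intro i
    by_cases h1 : FinKL (qi i) p ∨ l i = 0
    · rw [hreal i h1]; exact EReal.coe_ne_bot _
    · push Not at h1
      rw [hterm i h1.1 h1.2]; simp
  have hsb : ∀ s : Finset (Fin m), ∑ i ∈ s, (l i : EReal) * (KL (qi i) p - (b i : EReal)) ≠ ⊥ := by
    intro s
    induction s using Finset.induction_on with
    | empty => simp
    | insert a s ha ih =>
      rw [Finset.sum_insert ha]
      simp only [ne_eq, EReal.add_eq_bot_iff, not_or]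
      exact ⟨hnb a, ih⟩
  by_cases hq : FinKL q p
  swap
  · rw [KL_of_not_fin hq, EReal.top_add_of_ne_bot (hsb _)]
    exact le_top
  by_cases hall : ∀ i, FinKL (qi i) p ∨ l i = 0
  swap
  · push Not at hall
    obtain ⟨i, h1, h2⟩ := hall
    rw [← Finset.add_sum_erase _ _ (Finset.mem_univ i), hterm i h1 h2,
      EReal.top_add_of_ne_bot (hsb _), EReal.add_top_of_ne_bot]
    · exact le_top
    · rw [KL_of_fin hq]; exact EReal.coe_ne_bot _
  rw [Finset.sum_congr rfl (fun i _ => hreal i (hall i)), KL_of_fin hq]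
  have hcs : ∑ i, ((l i * (rKL (qi i) p - b i) : ℝ) : EReal)
      = ((∑ i, l i * (rKL (qi i) p - b i) : ℝ) : EReal) :=
    (map_sum (⟨⟨Real.toEReal, rfl⟩, EReal.coe_add⟩ : ℝ →+ EReal) _ _).symm
  rw [hcs, ← EReal.coe_add, EReal.coe_le_coe_iff]
  have hs : ∀ s : ℝ, s ∈ Set.Ioo (0:ℝ) 1 → F ≤ (rKL q p + ∑ i, l i * (rKL (qi i) p - b i))
      - (1 + ∑ i, l i) * Real.log s := by
    rintro s ⟨hs0, hs1⟩
    have ht : 0 < 1 - s := by linarith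
    have hst : s + (1 - s) = 1 := by ring
    have := mixM_prob hs0.le ht.le hst p p0
    have h1 := h (mixM s (1 - s) p p0) this (mix_scale hs0 ht.le hst hq).1
      (fun i => (mix_scale' hs0.le ht hst (hi0 i)).1)
    refine h1.trans ?_
    have h2 := (mix_scale (ν₂ := p0) hs0 ht.le hst hq).2
    have h3 : ∑ i, l i * (rKL (qi i) (mixM s (1 - s) p p0) - b i)
        ≤ ∑ i, (l i * (rKL (qi i) p - b i) - l i * Real.log s) := by
      refine Finset.sum_le_sum fun i _ => ?_
      rcases hall i with h4 | h4
      · have h5 := (mix_scale (ν₂ := p0) hs0 ht.le hst h4).2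
        have := mul_le_mul_of_nonneg_left h5 (hl i)
        linarith
      · simp [h4]
    rw [Finset.sum_sub_distrib, ← Finset.sum_mul] at h3
    linarith
  have hlim : Filter.Tendsto (fun s : ℝ => (rKL q p + ∑ i, l i * (rKL (qi i) p - b i))
      - (1 + ∑ i, l i) * Real.log s) (nhdsWithin 1 (Set.Iio 1))
      (nhds ((rKL q p + ∑ i, l i * (rKL (qi i) p - b i)) - (1 + ∑ i, l i) * Real.log 1)) := by
    refine Filter.Tendsto.mono_left ?_ nhdsWithin_le_nhds
    exact ((Real.continuousAt_log one_ne_zero).tendsto.const_mul _).const_sub _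
  rw [Real.log_one, mul_zero, sub_zero] at hlim
  refine ge_of_tendsto hlim ?_
  filter_upwards [Ioo_mem_nhdsLT (zero_lt_one (α := ℝ))] with s hs'
  exact hs s hs'

end aux

/-- strong duality: under the Slater condition, the optimal value
`F* = inf {KL(q‖p) : KL(qⁱ‖p) ≤ bᵢ ∀ i}` equals the optimal dual value
`D* = sup_{λ ≥ 0} g(λ)`, and the dual supremum is attained at some `λ* ≥ 0`. -/
theorem stmt1 {X : Type*} [MeasurableSpace X] {m : ℕ}
    (q : Measure X) [IsProbabilityMeasure q]
    (qi : Fin m → Measure X) (hqi : ∀ i, IsProbabilityMeasure (qi i))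
    (b : Fin m → ℝ)
    (hSlater : ∃ phat : Measure X, IsProbabilityMeasure phat ∧
      ∃ ζ : ℝ, 0 < ζ ∧ ∀ i, KL (qi i) phat ≤ ((b i - ζ : ℝ) : EReal)) :
    sInf {x : EReal | ∃ p : Measure X, IsProbabilityMeasure p ∧
        (∀ i, KL (qi i) p ≤ (b i : EReal)) ∧ x = KL q p}
      = (⨆ l ∈ {l : Fin m → ℝ | ∀ i, 0 ≤ l i}, dualFn q qi b l) ∧
    ∃ lstar ∈ {l : Fin m → ℝ | ∀ i, 0 ≤ l i},
      dualFn q qi b lstar = ⨆ l ∈ {l : Fin m → ℝ | ∀ i, 0 ≤ l i}, dualFn q qi b l := by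
  obtain ⟨ph, hph, ζ, hζ, hS⟩ := hSlater
  set S := {x : EReal | ∃ p : Measure X, IsProbabilityMeasure p ∧
        (∀ i, KL (qi i) p ≤ (b i : EReal)) ∧ x = KL q p} with hSdef
  -- a strictly feasible measure with every divergence finite
  obtain ⟨p0, hp0, hq0, hi0, hlt⟩ : ∃ p0 : Measure X, IsProbabilityMeasure p0 ∧ FinKL q p0 ∧
      (∀ i, FinKL (qi i) p0) ∧ ∀ i, rKL (qi i) p0 < b i := by
    have hs0 : 0 < Real.exp (-(ζ / 2)) := Real.exp_pos _
    have ht : 0 < 1 - Real.exp (-(ζ / 2)) := by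
      have : Real.exp (-(ζ / 2)) < 1 := by simpa using hζ
      linarith
    have hst : Real.exp (-(ζ / 2)) + (1 - Real.exp (-(ζ / 2))) = 1 := by ring
    have hqq : FinKL q q := by
      refine ⟨Measure.AbsolutelyContinuous.rfl, ?_⟩
      rw [integrable_congr (llr_self q)]
      exact integrable_zero _ _ _
    refine ⟨mixM _ _ ph q, mixM_prob hs0.le ht.le hst ph q, (mix_scale' hs0.le ht hst hqq).1,
      fun i => (mix_scale hs0 ht.le hst (fin_of_KL_le (hS i)).1).1, fun i => ?_⟩
    have h1 := fin_of_KL_le (hS i)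
    have h2 := (mix_scale (ν₂ := q) hs0 ht.le hst h1.1).2
    rw [Real.log_exp] at h2
    linarith [h1.2]
  have hp0S : KL q p0 ∈ S := ⟨p0, hp0, fun i => by
    rw [KL_of_fin (hi0 i)]; exact_mod_cast (hlt i).le, rfl⟩
  have hne_top : sInf S ≠ ⊤ := by
    have h1 : sInf S ≤ _ := sInf_le hp0S
    rw [KL_of_fin hq0] at h1
    exact (h1.trans_lt (EReal.coe_lt_top _)).ne
  have hne_bot : sInf S ≠ ⊥ := by
    have h0 : (0 : EReal) ≤ sInf S := by
      refine le_sInf ?_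
      rintro x ⟨p, hp, -, rfl⟩
      exact KL_nonneg
    exact (EReal.bot_lt_zero.trans_le h0).ne'
  have hF := EReal.coe_toReal hne_top hne_bot
  obtain ⟨l, hl, hmul⟩ := exists_mult q qi hqi b p0 hp0 hq0 hi0 hlt (sInf S).toReal (by
    intro p h1 h2 h3 h4
    rw [← EReal.coe_le_coe_iff, hF, ← KL_of_fin h2]
    exact sInf_le ⟨p, h1, fun i => by rw [KL_of_fin (h3 i)]; exact_mod_cast h4 i, rfl⟩)
  have hdual : sInf S ≤ dualFn q qi b l := by
    refine le_iInf fun p => ?_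
    rw [← hF]
    exact le_lag q qi hqi b p0 hp0 hq0 hi0 _ l hl hmul p.1 p.2
  have hsup : dualFn q qi b l ≤ ⨆ l ∈ {l : Fin m → ℝ | ∀ i, 0 ≤ l i}, dualFn q qi b l :=
    le_iSup₂_of_le l hl le_rfl
  have hweak : (⨆ l ∈ {l : Fin m → ℝ | ∀ i, 0 ≤ l i}, dualFn q qi b l) ≤ sInf S := by
    refine iSup₂_le fun l hl => le_sInf ?_
    rintro x ⟨p, hp, hpb, rfl⟩
    refine (iInf_le _ ⟨p, hp⟩).trans ?_
    unfold Lagrangian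
    have : ∑ i, (l i : EReal) * (KL (qi i) p - (b i : EReal)) ≤ 0 := by
      refine Finset.sum_nonpos fun i _ => ?_
      have h1 := fin_of_KL_le (hpb i)
      rw [KL_of_fin h1.1]
      have : l i * (rKL (qi i) p - b i) ≤ 0 :=
        mul_nonpos_of_nonneg_of_nonpos (hl i) (by linarith [h1.2])
      exact_mod_cast this
    calc _ ≤ KL q p + 0 := by gcongr
      _ = _ := add_zero _
  exact ⟨le_antisymm (hdual.trans hsup) hweak, l, hl, le_antisymm hsup (hweak.trans hdual)⟩
end

section
/- Let ν₁, …, ν_n be probability measures on a measurable space X, let w₁, …, w_n ≥ 0 with Σᵢ wᵢ = 1, and set ν̄ = Σᵢ wᵢ νᵢ. Then for every probability measure p on X, the compensation identity holds in [0, ∞]: Σᵢ wᵢ KL(νᵢ‖p) = KL(ν̄‖p) + Σᵢ wᵢ KL(νᵢ‖ν̄). -/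
open MeasureTheory

lemma integrable_llr_of_le_aux {X : Type*} [MeasurableSpace X] (μ ν : Measure X)
    [IsFiniteMeasure μ] [IsFiniteMeasure ν] (h : μ ≤ ν) : Integrable (llr μ ν) μ := by
  rw [← InformationTheory.integrable_klFun_rnDeriv_iff (Measure.absolutelyContinuous_of_le h)]
  refine Integrable.of_bound (C := 1) (Measurable.aestronglyMeasurable (by fun_prop)) ?_
  filter_upwards [Measure.rnDeriv_le_one_of_le h] with x hx
  have h0 : 0 ≤ (μ.rnDeriv ν x).toReal := ENNReal.toReal_nonneg
  have h1 : (μ.rnDeriv ν x).toReal ≤ 1 := by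
    simpa using ENNReal.toReal_mono ENNReal.one_ne_top hx
  rw [Real.norm_of_nonneg (InformationTheory.klFun_nonneg h0), InformationTheory.klFun]
  nlinarith [mul_nonneg h0 (neg_nonneg.mpr (Real.log_nonpos h0 h1))]

lemma integrable_llr_of_smul_le_aux {X : Type*} [MeasurableSpace X] (μ ν : Measure X)
    [IsFiniteMeasure μ] [IsFiniteMeasure ν] (c : ENNReal) (hc : c ≠ 0) (hc' : c ≠ ⊤)
    (h : c • μ ≤ ν) : Integrable (llr μ ν) μ := by
  have hac : μ ≪ ν :=
    (Measure.absolutelyContinuous_smul hc).trans (Measure.absolutelyContinuous_of_le h)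
  have : IsFiniteMeasure (c • μ) := isFiniteMeasure_of_le ν h
  have h1 := integrable_llr_of_le_aux (c • μ) ν h
  rw [integrable_smul_measure hc hc', integrable_congr (llr_smul_left hac c hc hc')] at h1
  refine (h1.sub (integrable_const (Real.log c.toReal))).congr (ae_of_all _ fun x => ?_)
  simp

lemma llr_chain_aux {X : Type*} [MeasurableSpace X] (μ ν p : Measure X)
    [IsFiniteMeasure μ] [IsFiniteMeasure ν] [IsFiniteMeasure p] (h1 : μ ≪ ν) (h2 : ν ≪ p) :
    llr μ p =ᵐ[μ] fun x => llr μ ν x + llr ν p x := by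
  filter_upwards [(h1.trans h2).ae_le (Measure.rnDeriv_mul_rnDeriv (κ := p) h1),
    Measure.rnDeriv_pos h1, h1.ae_le (Measure.rnDeriv_lt_top μ ν),
    h1.ae_le (Measure.rnDeriv_pos h2), (h1.trans h2).ae_le (Measure.rnDeriv_lt_top ν p)]
    with x e a b c d
  rw [llr, llr, llr, ← e, Pi.mul_apply, ENNReal.toReal_mul, Real.log_mul]
  · exact (ENNReal.toReal_pos a.ne' b.ne).ne'
  · exact (ENNReal.toReal_pos c.ne' d.ne).ne'

lemma EReal_sum_ne_bot_aux {ι : Type*} (s : Finset ι) (f : ι → EReal)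
    (h : ∀ i ∈ s, f i ≠ ⊥) : ∑ i ∈ s, f i ≠ ⊥ := by
  classical
  induction s using Finset.induction_on with
  | empty => simp
  | insert a s ha ih =>
    rw [Finset.sum_insert ha]
    simp only [ne_eq, EReal.add_eq_bot_iff, not_or]
    exact ⟨h a (by simp), ih fun i hi => h i (by simp [hi])⟩

lemma EReal_coe_sum_aux {ι : Type*} (s : Finset ι) (f : ι → ℝ) :
    ∑ i ∈ s, (f i : EReal) = ((∑ i ∈ s, f i : ℝ) : EReal) := by
  classical
  induction s using Finset.induction_on with
  | empty => simp
  | insert a s ha ih => rw [Finset.sum_insert ha, Finset.sum_insert ha, ih, EReal.coe_add]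

theorem stmt4 {X : Type*} [MeasurableSpace X] {n : ℕ}
    (ν : Fin n → Measure X) (hν : ∀ i, IsProbabilityMeasure (ν i))
    (w : Fin n → ℝ) (hw : ∀ i, 0 ≤ w i) (hw1 : ∑ i, w i = 1)
    (νbar : Measure X) (hνbar : νbar = ∑ i, ENNReal.ofReal (w i) • ν i)
    (p : Measure X) (hp : IsProbabilityMeasure p) :
    ∑ i, (w i : EReal) * KL (ν i) p
      = KL νbar p + ∑ i, (w i : EReal) * KL (ν i) νbar := by
  classical
  have hfin : IsFiniteMeasure νbar := by
    have (i : Fin n) : IsFiniteMeasure (ENNReal.ofReal (w i) • ν i) :=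
      Measure.smul_finite _ ENNReal.ofReal_ne_top
    rw [hνbar]; infer_instance
  have hle (i : Fin n) : ENNReal.ofReal (w i) • ν i ≤ νbar := by
    rw [hνbar]
    exact Finset.single_le_sum (f := fun i => ENNReal.ofReal (w i) • ν i)
      (fun _ _ => Measure.zero_le _) (Finset.mem_univ i)
  have hc (i : Fin n) (hi : w i ≠ 0) : ENNReal.ofReal (w i) ≠ 0 := by
    simpa using lt_of_le_of_ne (hw i) hi.symm
  have hac (i : Fin n) (hi : w i ≠ 0) : ν i ≪ νbar :=
    (Measure.absolutelyContinuous_smul (hc i hi)).trans (Measure.absolutelyContinuous_of_le (hle i))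
  have hint (i : Fin n) (hi : w i ≠ 0) : Integrable (llr (ν i) νbar) (ν i) :=
    integrable_llr_of_smul_le_aux _ _ _ (hc i hi) ENNReal.ofReal_ne_top (hle i)
  have hbarac : νbar ≪ p ↔ ∀ i, w i ≠ 0 → ν i ≪ p := by
    refine ⟨fun h i hi => (hac i hi).trans h, fun h => ?_⟩
    intro s hs
    rw [hνbar]
    simp only [Measure.coe_finsetSum, Finset.sum_apply, Measure.smul_apply, smul_eq_mul]
    refine Finset.sum_eq_zero fun i _ => ?_
    by_cases hi : w i = 0
    · simp [hi]
    · rw [h i hi hs, mul_zero]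
  have hbarint (f : X → ℝ) : Integrable f νbar ↔ ∀ i, w i ≠ 0 → Integrable f (ν i) := by
    rw [hνbar, integrable_finsetSum_measure]
    refine ⟨fun h i hi => ?_, fun h i _ => ?_⟩
    · exact (integrable_smul_measure (hc i hi) ENNReal.ofReal_ne_top).1 (h i (Finset.mem_univ i))
    · by_cases hi : w i = 0
      · simp [hi]
      · exact (h i hi).smul_measure ENNReal.ofReal_ne_top
  have hterm (hb : νbar ≪ p) (i : Fin n) (hi : w i ≠ 0) :
      Integrable (llr (ν i) p) (ν i) ↔ Integrable (llr νbar p) (ν i) := by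
    rw [integrable_congr (llr_chain_aux _ _ _ (hac i hi) hb)]
    refine ⟨fun h => ?_, fun h => (hint i hi).add h⟩
    refine (h.sub (hint i hi)).congr (ae_of_all _ fun x => ?_)
    simp
  have hsecond : ∑ i, (w i : EReal) * KL (ν i) νbar
      = ((∑ i, w i * ∫ x, llr (ν i) νbar x ∂(ν i) : ℝ) : EReal) := by
    rw [← EReal_coe_sum_aux]
    refine Finset.sum_congr rfl fun i _ => ?_
    by_cases hi : w i = 0
    · simp [hi]
    · rw [KL, if_pos ⟨hac i hi, hint i hi⟩, EReal.coe_mul]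
  rw [hsecond]
  by_cases hgood : νbar ≪ p ∧ Integrable (llr νbar p) νbar
  · obtain ⟨hb, hbi⟩ := hgood
    have hbi' := (hbarint _).1 hbi
    rw [KL, if_pos ⟨hb, hbi⟩, ← EReal.coe_add]
    have hI : ∫ x, llr νbar p x ∂νbar = ∑ i, w i * ∫ x, llr νbar p x ∂(ν i) := by
      generalize llr νbar p = f at hbi'
      rw [hνbar, integral_finsetSum_measure]
      · refine Finset.sum_congr rfl fun i _ => ?_
        rw [integral_smul_measure, ENNReal.toReal_ofReal (hw i), smul_eq_mul]
      · intro i _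
        by_cases hi : w i = 0
        · simp [hi]
        · exact (hbi' i hi).smul_measure ENNReal.ofReal_ne_top
    rw [hI, ← Finset.sum_add_distrib, ← EReal_coe_sum_aux]
    refine Finset.sum_congr rfl fun i _ => ?_
    by_cases hi : w i = 0
    · simp [hi]
    · rw [KL, if_pos ⟨(hac i hi).trans hb, (hterm hb i hi).2 (hbi' i hi)⟩,
        integral_congr_ae (llr_chain_aux _ _ _ (hac i hi) hb),
        integral_add (hint i hi) (hbi' i hi), ← EReal.coe_mul]
      congr 1
      ring
  · rw [KL, if_neg hgood, EReal.top_add_coe]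
    have hex : ∃ i, w i ≠ 0 ∧ ¬ (ν i ≪ p ∧ Integrable (llr (ν i) p) (ν i)) := by
      by_contra! hcon
      have hb : νbar ≪ p := hbarac.2 fun i hi => (hcon i hi).1
      exact hgood ⟨hb, (hbarint _).2 fun i hi => (hterm hb i hi).1 (hcon i hi).2⟩
    obtain ⟨i, hi, hbad⟩ := hex
    rw [← Finset.add_sum_erase _ _ (Finset.mem_univ i), KL, if_neg hbad,
      EReal.coe_mul_top_of_pos (lt_of_le_of_ne (hw i) hi.symm), EReal.top_add_of_ne_bot]
    refine EReal_sum_ne_bot_aux _ _ fun j _ => ?_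
    unfold KL
    split_ifs
    · rw [← EReal.coe_mul]; exact EReal.coe_ne_bot _
    · by_cases hj : w j = 0
      · simp [hj]
      · rw [EReal.coe_mul_top_of_pos (lt_of_le_of_ne (hw j) (Ne.symm hj))]
        simp
end

section
/- Let q⁰, q¹, …, qᵐ be pairwise mutually singular probability measures on a measurable space X and b ∈ ℝᵐ. Then there exists a probability measure p on X with KL(q⁰‖p) < ∞ and KL(qⁱ‖p) ≤ bᵢ for all i = 1, …, m if and only if Σ_{i=1}^m e^{−bᵢ} < 1. -/
open MeasureTheory

lemma exp_neg_le_aux {X : Type*} [MeasurableSpace X] (q p : Measure X)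
    [IsProbabilityMeasure q] [IsProbabilityMeasure p] (hac : q ≪ p)
    (hint : Integrable (llr q p) q) (A : Set X) (hA : q Aᶜ = 0) :
    Real.exp (-∫ x, llr q p x ∂q) ≤ p.real A := by
  have h1 : -llr q p =ᵐ[q] llr p q := neg_llr hac
  have hint' : Integrable (llr p q) q := hint.neg.congr h1
  have h2 : -∫ x, llr q p x ∂q = ∫ x, llr p q x ∂q := by
    rw [← integral_neg]; exact integral_congr_ae h1
  have h3 : (fun x => Real.exp (llr p q x)) =ᵐ[q] fun x => (p.rnDeriv q x).toReal :=
    exp_llr_of_ac' p q hac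
  have hI : Integrable (fun x => (p.rnDeriv q x).toReal) q := Measure.integrable_toReal_rnDeriv
  rw [h2]
  calc Real.exp (∫ x, llr p q x ∂q) ≤ ∫ x, Real.exp (llr p q x) ∂q :=
        convexOn_exp.map_integral_le Real.continuous_exp.continuousOn isClosed_univ (by simp)
          hint' (hI.congr h3.symm)
    _ = ∫ x, (p.rnDeriv q x).toReal ∂q := integral_congr_ae h3
    _ = ∫ x in A, (p.rnDeriv q x).toReal ∂q := by
        rw [Measure.restrict_eq_self_of_ae_mem]
        exact hA
    _ ≤ p.real A := Measure.setIntegral_toReal_rnDeriv_le (measure_ne_top _ _)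

lemma KL_mix_aux {X : Type*} [MeasurableSpace X] (q p r : Measure X)
    [IsProbabilityMeasure q] [IsFiniteMeasure p] [IsFiniteMeasure r] (c : NNReal) (hc : 0 < c)
    (hp : p = c • q + r) (hr : r ⟂ₘ q) :
    KL q p = ((-Real.log c : ℝ) : EReal) := by
  have hac : q ≪ p := by
    intro s hs
    rw [hp] at hs
    simp only [Measure.add_apply, Measure.smul_apply, add_eq_zero] at hs
    have := hs.1
    rw [ENNReal.smul_def, smul_eq_mul, mul_eq_zero] at this
    rcases this with h | h
    · simp [hc.ne'] at h
    · exact h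
  have h1 : -llr q p =ᵐ[q] llr p q := neg_llr hac
  have h2 : p.rnDeriv q =ᵐ[q] fun _ => (c : ENNReal) := by
    subst hp
    have a1 := Measure.rnDeriv_add (c • q) r q
    have a2 := Measure.rnDeriv_smul_left q q c
    have a3 := Measure.rnDeriv_self q
    have a4 := (Measure.rnDeriv_eq_zero r q).2 hr
    filter_upwards [a1, a2, a3, a4] with x b1 b2 b3 b4
    rw [b1, Pi.add_apply, b2, Pi.smul_apply, b3, b4]
    simp [ENNReal.smul_def]
  have h3 : llr q p =ᵐ[q] fun _ => -Real.log c := by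
    filter_upwards [h1, h2] with x b1 b2
    have : llr p q x = Real.log c := by simp [llr, b2]
    rw [← this, ← b1]; simp
  have hint : Integrable (llr q p) q := (integrable_const _).congr h3.symm
  rw [KL, if_pos ⟨hac, hint⟩, integral_congr_ae h3]
  simp

lemma disj_aux {X ι : Type*} [MeasurableSpace X] [Fintype ι] (Q : ι → Measure X)
    (h : Pairwise fun i j => Q i ⟂ₘ Q j) :
    ∃ A : ι → Set X, (∀ i, MeasurableSet (A i)) ∧ (∀ i, Q i (A i)ᶜ = 0) ∧
      Pairwise fun i j => Disjoint (A i) (A j) := by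
  classical
  have h' : ∀ i j, ∃ B : Set X, MeasurableSet B ∧ (i ≠ j → Q i B = 0 ∧ Q j Bᶜ = 0) := by
    intro i j
    by_cases hij : i = j
    · exact ⟨∅, MeasurableSet.empty, fun hh => absurd hij hh⟩
    · obtain ⟨s, hs, h1, h2⟩ := h hij
      exact ⟨s, hs, fun _ => ⟨h1, h2⟩⟩
  choose B hB hB' using h'
  refine ⟨fun i => ⋂ k, ⋂ (_ : i ≠ k), ((B i k)ᶜ ∩ B k i), ?_, ?_, ?_⟩
  · intro i
    exact MeasurableSet.iInter fun k => MeasurableSet.iInter fun _ => (hB i k).compl.inter (hB k i)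
  · intro i
    simp only [Set.compl_iInter, Set.compl_inter, compl_compl]
    refine measure_iUnion_null fun k => measure_iUnion_null fun hik => measure_union_null ?_ ?_
    · exact (hB' i k hik).1
    · exact (hB' k i hik.symm).2
  · intro i j hij
    rw [Set.disjoint_left]
    intro x hx hy
    simp only [Set.mem_iInter] at hx hy
    exact (hx j hij).1 (hy i hij.symm).2

/-- feasibility criterion: for pairwise mutually singular probability
measures `q⁰, q¹, …, qᵐ` and thresholds `b`, there exists a probability measure `p` with
`KL(q⁰‖p) < ∞` and `KL(qⁱ‖p) ≤ bᵢ` for all `i` if and only if `∑ i, e^{−bᵢ} < 1`. -/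
theorem stmt11 {X : Type*} [MeasurableSpace X] {m : ℕ}
    (q0 : Measure X) [IsProbabilityMeasure q0]
    (qi : Fin m → Measure X) (hqi : ∀ i, IsProbabilityMeasure (qi i))
    (hsing0 : ∀ i, q0 ⟂ₘ qi i)
    (hsing : Pairwise fun i j => qi i ⟂ₘ qi j)
    (b : Fin m → ℝ) :
    (∃ p : Measure X, IsProbabilityMeasure p ∧ KL q0 p < (⊤ : EReal) ∧
        ∀ i, KL (qi i) p ≤ (b i : EReal))
      ↔ ∑ i, Real.exp (-b i) < 1 := by
  classical
  let Q : Option (Fin m) → Measure X := fun o => o.elim q0 qi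
  have hQp : ∀ o, IsProbabilityMeasure (Q o) := by
    rintro (_ | i)
    · assumption
    · exact hqi i
  have hQ : Pairwise fun i j => Q i ⟂ₘ Q j := by
    rintro (_ | i) (_ | j) hij
    · exact absurd rfl hij
    · exact hsing0 j
    · exact (hsing0 i).symm
    · exact hsing (fun h => hij (by rw [h]))
  constructor
  · rintro ⟨p, hp, h0, hi⟩
    obtain ⟨A, hAm, hA, hd⟩ := disj_aux Q hQ
    have key : ∀ (q : Measure X), KL q p < ⊤ → q ≪ p ∧ Integrable (llr q p) q := by
      intro q hq
      by_contra hcon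
      rw [KL, if_neg hcon] at hq
      exact lt_irrefl _ hq
    have hsum : ∑ o, p.real (A o) ≤ 1 := by
      rw [← measureReal_biUnion_finset (fun i _ j _ hij => hd hij) (fun i _ => hAm i)]
      exact measureReal_le_one
    rw [Fintype.sum_option] at hsum
    have hpos : 0 < p.real (A none) := by
      have := exp_neg_le_aux q0 p (key q0 h0).1 (key q0 h0).2 (A none) (hA none)
      exact lt_of_lt_of_le (Real.exp_pos _) this
    have hle : ∑ i, Real.exp (-b i) ≤ ∑ i, p.real (A (some i)) := by
      refine Finset.sum_le_sum fun i _ => ?_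
      have hk := key (qi i) (lt_of_le_of_lt (hi i) (EReal.coe_lt_top _))
      have hb := hi i
      rw [KL, if_pos hk, EReal.coe_le_coe_iff] at hb
      have := hqi i
      refine le_trans (Real.exp_le_exp.2 (neg_le_neg hb)) ?_
      exact exp_neg_le_aux (qi i) p hk.1 hk.2 (A (some i)) (hA (some i))
    linarith
  · intro hlt
    let c : Option (Fin m) → NNReal := fun o =>
      o.elim (Real.toNNReal (1 - ∑ i, Real.exp (-b i))) (fun i => Real.toNNReal (Real.exp (-b i)))
    have hc : ∀ o, 0 < c o := by
      rintro (_ | i)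
      · exact Real.toNNReal_pos.2 (by linarith)
      · exact Real.toNNReal_pos.2 (Real.exp_pos _)
    have hcs : ∑ o, c o = 1 := by
      rw [← NNReal.coe_inj, NNReal.coe_sum, Fintype.sum_option]
      have e1 : ((c none : NNReal) : ℝ) = 1 - ∑ i, Real.exp (-b i) :=
        Real.coe_toNNReal _ (by linarith)
      have e2 : ∀ i, ((c (some i) : NNReal) : ℝ) = Real.exp (-b i) := fun i =>
        Real.coe_toNNReal _ (Real.exp_pos _).le
      simp [e1, e2]
    let p : Measure X := ∑ o, c o • Q o
    have hp : IsProbabilityMeasure p := by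
      constructor
      simp only [p, Measure.finsetSum_apply, Measure.smul_apply, measure_univ, ENNReal.smul_def,
        smul_eq_mul, mul_one]
      rw [← ENNReal.ofNNReal_finsetSum, hcs]; rfl
    have hKL : ∀ o, KL (Q o) p = ((-Real.log (c o) : ℝ) : EReal) := by
      intro o
      refine KL_mix_aux (Q o) p (∑ k ∈ Finset.univ.erase o, c k • Q k) (c o) (hc o) ?_ ?_
      · exact (Finset.add_sum_erase _ _ (Finset.mem_univ o)).symm
      · have : ∀ s : Finset (Option (Fin m)), o ∉ s → (∑ k ∈ s, c k • Q k) ⟂ₘ Q o := by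
          intro s
          induction s using Finset.induction_on with
          | empty => intro _; simp
          | insert a s ha ih =>
            intro ho
            rw [Finset.sum_insert ha]
            rw [Finset.mem_insert, not_or] at ho
            exact ((hQ (Ne.symm ho.1)).smul (c a)).add_left (ih ho.2)
        exact this _ (by simp)
    refine ⟨p, hp, ?_, fun i => ?_⟩
    · have := hKL none
      change KL q0 p = _ at this
      rw [this]; exact EReal.coe_lt_top _
    · have := hKL (some i)
      change KL (qi i) p = _ at this
      rw [this]
      have e2 : ((c (some i) : NNReal) : ℝ) = Real.exp (-b i) :=
        Real.coe_toNNReal _ (Real.exp_pos _).le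
      rw [e2, Real.log_exp, neg_neg]
end

section
/- Let H be a real normed space, K ⊆ H a nonempty compact convex set, f₀ : H → ℝ continuous and strictly convex, and f₁, …, f_m : H → ℝ continuous and convex. For λ ∈ ℝ₊ᵐ define g(λ) = min_{x ∈ K} [f₀(x) + Σᵢ λᵢ fᵢ(x)]. Then for each λ ∈ ℝ₊ᵐ the minimizer x*(λ) is unique, g is concave, and g is differentiable at every λ in the interior (0, ∞)ᵐ with ∂g/∂λᵢ (λ) = fᵢ(x*(λ)) for each i. -/
/-- let `K` be a nonempty compact convex subset of a real normed space,
`f₀` continuous and strictly convex, `f₁, …, f_m` continuous and convex, and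
`g(λ) = min_{x ∈ K} [f₀(x) + ∑ i, λᵢ fᵢ(x)]`.  Then for each `λ ≥ 0` the minimizer is
unique, `g` is concave on `ℝ₊ᵐ`, and at every interior point `λ > 0` the function `g` is
differentiable with `∂g/∂λᵢ (λ) = fᵢ(x*(λ))`. -/
theorem stmt13 {H : Type*} [NormedAddCommGroup H] [NormedSpace ℝ H] {m : ℕ}
    (K : Set H) (hKne : K.Nonempty) (hKcp : IsCompact K) (hKcv : Convex ℝ K)
    (f0 : H → ℝ) (hf0c : Continuous f0) (hf0 : StrictConvexOn ℝ Set.univ f0)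
    (f : Fin m → H → ℝ) (hfc : ∀ i, Continuous (f i))
    (hf : ∀ i, ConvexOn ℝ Set.univ (f i))
    (g : (Fin m → ℝ) → ℝ)
    (hg : ∀ l : Fin m → ℝ, g l = sInf ((fun x => f0 x + ∑ i, l i * f i x) '' K)) :
    (∀ l : Fin m → ℝ, (∀ i, 0 ≤ l i) →
      ∃! x : H, x ∈ K ∧ IsMinOn (fun y => f0 y + ∑ i, l i * f i y) K x) ∧
    ConcaveOn ℝ {l : Fin m → ℝ | ∀ i, 0 ≤ l i} g ∧
    (∀ l : Fin m → ℝ, (∀ i, 0 < l i) →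
      ∀ x : H, x ∈ K → IsMinOn (fun y => f0 y + ∑ i, l i * f i y) K x →
        HasFDerivAt g
          (∑ i, f i x • (ContinuousLinearMap.proj i : (Fin m → ℝ) →L[ℝ] ℝ)) l) := by
  have hLc : Continuous (fun p : (Fin m → ℝ) × H => f0 p.2 + ∑ i, p.1 i * f i p.2) := by
    fun_prop
  have hLl : ∀ l : Fin m → ℝ, Continuous (fun y : H => f0 y + ∑ i, l i * f i y) := by
    intro l
    fun_prop
  have hex : ∀ l : Fin m → ℝ, ∃ x, x ∈ K ∧ IsMinOn (fun y => f0 y + ∑ i, l i * f i y) K x :=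
    fun l => hKcp.exists_isMinOn hKne (hLl l).continuousOn
  have hmin : ∀ (l : Fin m → ℝ) (x : H), x ∈ K →
      IsMinOn (fun y => f0 y + ∑ i, l i * f i y) K x → g l = f0 x + ∑ i, l i * f i x := by
    intro l x hx hm
    rw [hg l]
    apply IsLeast.csInf_eq
    refine ⟨⟨x, hx, rfl⟩, ?_⟩
    rintro _ ⟨y, hy, rfl⟩
    exact hm hy
  have hle : ∀ (l : Fin m → ℝ) (y : H), y ∈ K → g l ≤ f0 y + ∑ i, l i * f i y := by
    intro l y hy
    obtain ⟨x, hx, hm⟩ := hex l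
    rw [hmin l x hx hm]
    exact hm hy
  have hsc : ∀ l : Fin m → ℝ, (∀ i, 0 ≤ l i) →
      StrictConvexOn ℝ K (fun y => f0 y + ∑ i, l i * f i y) := by
    intro l hl
    have h1 : StrictConvexOn ℝ K f0 := hf0.subset (Set.subset_univ _) hKcv
    refine h1.add_convexOn ⟨hKcv, ?_⟩
    intro x _ y _ a b ha hb hab
    simp only [smul_eq_mul, Finset.mul_sum, ← Finset.sum_add_distrib]
    refine Finset.sum_le_sum fun i _ => ?_
    have := (hf i).2 (Set.mem_univ x) (Set.mem_univ y) ha hb hab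
    simp only [smul_eq_mul] at this
    have := mul_le_mul_of_nonneg_left this (hl i)
    linarith
  have huniq : ∀ l : Fin m → ℝ, (∀ i, 0 ≤ l i) → ∀ x y : H, x ∈ K → y ∈ K →
      IsMinOn (fun y => f0 y + ∑ i, l i * f i y) K x →
      IsMinOn (fun y => f0 y + ∑ i, l i * f i y) K y → x = y :=
    fun l hl x y hx hy h1 h2 => (hsc l hl).eq_of_isMinOn h1 h2 hx hy
  refine ⟨?_, ⟨?_, ?_⟩, ?_⟩
  · intro l hl
    obtain ⟨x, hx, hm⟩ := hex l
    exact ⟨x, ⟨hx, hm⟩, fun y hy => huniq l hl y x hy.1 hx hy.2 hm⟩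
  · intro a ha b hb s t hs ht _ i
    simp only [Pi.add_apply, Pi.smul_apply, smul_eq_mul]
    exact add_nonneg (mul_nonneg hs (ha i)) (mul_nonneg ht (hb i))
  · intro a _ b _ s t hs ht hst
    obtain ⟨x, hx, hm⟩ := hex (s • a + t • b)
    rw [hmin _ x hx hm]
    have h1 := mul_le_mul_of_nonneg_left (hle a x hx) hs
    have h2 := mul_le_mul_of_nonneg_left (hle b x hx) ht
    have h3 : ∑ i, (s • a + t • b) i * f i x
        = s * ∑ i, a i * f i x + t * ∑ i, b i * f i x := by
      simp only [Finset.mul_sum, ← Finset.sum_add_distrib]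
      refine Finset.sum_congr rfl fun i _ => ?_
      simp only [Pi.add_apply, Pi.smul_apply, smul_eq_mul]
      ring
    have h4 : f0 x = s * f0 x + t * f0 x := by rw [← add_mul, hst, one_mul]
    simp only [smul_eq_mul]
    rw [h3]
    linarith
  · intro l hl x hx hm
    choose X hXK hXm using hex
    have hX : Filter.Tendsto X (nhds l) (nhds x) := by
      refine hKcp.tendsto_nhds_of_unique_mapClusterPt
        (Filter.Eventually.of_forall hXK) ?_
      intro y hy hc
      obtain ⟨U, hU, hUy⟩ := mapClusterPt_iff_ultrafilter.1 hc
      have hid : Filter.Tendsto (fun l' : Fin m → ℝ => l') U (nhds l) := hU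
      have hyx : f0 y + ∑ i, l i * f i y ≤ f0 x + ∑ i, l i * f i x := by
        have t1 := (hLc.tendsto (l, y)).comp (hid.prodMk_nhds hUy)
        have t2 := (hLc.tendsto (l, x)).comp
          (hid.prodMk_nhds (tendsto_const_nhds (x := x)))
        exact le_of_tendsto_of_tendsto' t1 t2 fun l' => hXm l' hx
      refine huniq l (fun i => (hl i).le) y x hy hx (fun z hz => ?_) hm
      exact hyx.trans (hm hz)
    have hS : Filter.Tendsto (fun l' => ∑ i, |f i (X l') - f i x|) (nhds l) (nhds 0) := by
      have hc : Continuous (fun y => ∑ i, |f i y - f i x|) := by fun_prop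
      have := (hc.tendsto x).comp hX
      simpa [Function.comp_def] using this
    rw [hasFDerivAt_iff_isLittleO, Asymptotics.isLittleO_iff]
    intro c hc
    filter_upwards [hS.eventually (gt_mem_nhds hc)] with l' hl'
    have e1 : (∑ i, f i x • (ContinuousLinearMap.proj i : (Fin m → ℝ) →L[ℝ] ℝ)) (l' - l)
        = ∑ i, l' i * f i x - ∑ i, l i * f i x := by
      simp only [ContinuousLinearMap.sum_apply, ContinuousLinearMap.smul_apply,
        ContinuousLinearMap.proj_apply, smul_eq_mul, Pi.sub_apply, ← Finset.sum_sub_distrib]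
      exact Finset.sum_congr rfl fun i _ => by ring
    rw [e1]
    have a1 := hmin l x hx hm
    have a2 := hle l' x hx
    have a3 := hmin l' _ (hXK l') (hXm l')
    have a4 := hle l _ (hXK l')
    have key : |∑ i, (l' i - l i) * (f i (X l') - f i x)| ≤ c * ‖l' - l‖ := by
      calc _ ≤ ∑ i, |(l' i - l i) * (f i (X l') - f i x)| := Finset.abs_sum_le_sum_abs _ _
        _ ≤ ∑ i, |f i (X l') - f i x| * ‖l' - l‖ := by
          refine Finset.sum_le_sum fun i _ => ?_
          rw [abs_mul, mul_comm]
          exact mul_le_mul_of_nonneg_left (norm_le_pi_norm (l' - l) i) (abs_nonneg _)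
        _ = (∑ i, |f i (X l') - f i x|) * ‖l' - l‖ := by rw [Finset.sum_mul]
        _ ≤ _ := mul_le_mul_of_nonneg_right hl'.le (norm_nonneg _)
    have e2 : ∑ i, (l' i - l i) * (f i (X l') - f i x)
        = (∑ i, l' i * f i (X l') - ∑ i, l i * f i (X l'))
          - (∑ i, l' i * f i x - ∑ i, l i * f i x) := by
      simp only [← Finset.sum_sub_distrib]
      exact Finset.sum_congr rfl fun i _ => by ring
    have k2 := neg_le_of_abs_le key
    have k3 : 0 ≤ c * ‖l' - l‖ := by positivity
    rw [e2] at k2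
    rw [Real.norm_eq_abs, abs_le]
    constructor <;> linarith
end

section
/- Let H be a real Hilbert space, c₀ ∈ H, and ℓ₀(x) = ‖x − c₀‖². Let ℓ₁, …, ℓ_m : H → ℝ be convex and Fréchet differentiable with 2-Lipschitz gradients: ‖∇ℓᵢ(x) − ∇ℓᵢ(y)‖ ≤ 2‖x − y‖ for all x, y. Let Λ ⊆ ℝ₊ᵐ be convex, and suppose that for each λ ∈ Λ the function x ↦ ℓ₀(x) + Σᵢ λᵢ ℓᵢ(x) has a global minimizer x*(λ) ∈ H, and that there is σ > 0 with ‖Σᵢ vᵢ ∇ℓᵢ(x*(λ))‖ ≥ σ‖v‖ for all v ∈ ℝᵐ and λ ∈ Λ. Define g(λ) = min_x [ℓ₀(x) + Σᵢ λᵢ ℓᵢ(x)]. Then for all λ₁, λ₂ ∈ Λ one has −(ℓ(x*(λ₂)) − ℓ(x*(λ₁)))ᵀ(λ₂ − λ₁) ≥ (1/2)(σ/(1 + ‖λ₁‖₁))² ‖λ₂ − λ₁‖², where ℓ(x) = (ℓ₁(x), …, ℓ_m(x)); consequently g is μ-strongly concave on Λ with μ = (1/2)(σ/(1 + sup_{λ∈Λ}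 ‖λ‖₁))² whenever sup_{λ∈Λ} ‖λ‖₁ < ∞. -/
lemma aux_growth {H : Type*} [NormedAddCommGroup H] [InnerProductSpace ℝ H]
    {m : ℕ} (c0 : H) (ℓ : Fin m → H → ℝ) (hℓcv : ∀ i, ConvexOn ℝ Set.univ (ℓ i))
    (l : Fin m → ℝ) (hl : ∀ i, 0 ≤ l i) (x : H)
    (hmin : ∀ y : H, ‖x - c0‖ ^ 2 + ∑ i, l i * ℓ i x ≤ ‖y - c0‖ ^ 2 + ∑ i, l i * ℓ i y)
    (y : H) :
    ‖x - c0‖ ^ 2 + ∑ i, l i * ℓ i x + ‖y - x‖ ^ 2 ≤ ‖y - c0‖ ^ 2 + ∑ i, l i * ℓ i y := by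
  have key : ∀ s : ℝ, 0 < s → s < 1 → (1 - s) * ‖y - x‖ ^ 2 ≤
      (‖y - c0‖ ^ 2 + ∑ i, l i * ℓ i y) - (‖x - c0‖ ^ 2 + ∑ i, l i * ℓ i x) := by
    intro s hs0 hs1
    have h1 := hmin ((1 - s) • x + s • y)
    have h2 : ∑ i, l i * ℓ i ((1 - s) • x + s • y) ≤
        (1 - s) * ∑ i, l i * ℓ i x + s * ∑ i, l i * ℓ i y := by
      rw [Finset.mul_sum, Finset.mul_sum, ← Finset.sum_add_distrib]
      refine Finset.sum_le_sum fun i _ => ?_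
      have := (hℓcv i).2 (Set.mem_univ x) (Set.mem_univ y) (by linarith : 0 ≤ 1 - s) hs0.le
        (by ring)
      simp only [smul_eq_mul] at this
      nlinarith [mul_le_mul_of_nonneg_left this (hl i)]
    have h3 : ‖(1 - s) • x + s • y - c0‖ ^ 2 =
        (1 - s) * ‖x - c0‖ ^ 2 + s * ‖y - c0‖ ^ 2 - s * (1 - s) * ‖y - x‖ ^ 2 := by
      have e1 : (1 - s) • x + s • y - c0 = (x - c0) + s • (y - x) := by module
      have e2 : y - c0 = (x - c0) + (y - x) := by abel
      rw [e1, e2, norm_add_sq_real, norm_add_sq_real, norm_smul, inner_smul_right, mul_pow,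
        Real.norm_eq_abs, sq_abs]
      ring
    rw [h3] at h1
    have : s * ((1 - s) * ‖y - x‖ ^ 2) ≤
      s * ((‖y - c0‖ ^ 2 + ∑ i, l i * ℓ i y) - (‖x - c0‖ ^ 2 + ∑ i, l i * ℓ i x)) := by
      linarith
    exact le_of_mul_le_mul_left this hs0
  have hlim : Filter.Tendsto (fun s : ℝ => (1 - s) * ‖y - x‖ ^ 2) (nhdsWithin 0 (Set.Ioi 0))
      (nhds ((1 - 0) * ‖y - x‖ ^ 2)) := by
    refine Filter.Tendsto.mono_left (Continuous.tendsto ?_ 0) nhdsWithin_le_nhds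
    fun_prop
  have := le_of_tendsto hlim (by
    filter_upwards [Ioo_mem_nhdsGT (zero_lt_one' ℝ)] with s hs
    exact key s hs.1 hs.2)
  linarith

lemma aux_stat {H : Type*} [NormedAddCommGroup H] [InnerProductSpace ℝ H]
    [CompleteSpace H] {m : ℕ} (c0 : H) (ℓ : Fin m → H → ℝ)
    (G : Fin m → H → H) (hG : ∀ i x, HasGradientAt (ℓ i) (G i x) x)
    (l : Fin m → ℝ) (x : H)
    (hmin : ∀ y : H, ‖x - c0‖ ^ 2 + ∑ i, l i * ℓ i x ≤ ‖y - c0‖ ^ 2 + ∑ i, l i * ℓ i y) :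
    (2 : ℝ) • (x - c0) + ∑ i, l i • G i x = 0 := by
  have h1 : HasFDerivAt (fun y : H => ‖y - c0‖ ^ 2) _ x :=
    ((hasFDerivAt_id x).sub_const c0).norm_sq
  have h2 : HasFDerivAt (fun y : H => ∑ i, l i * ℓ i y) _ x :=
    HasFDerivAt.fun_sum (u := Finset.univ) fun i _ => ((hG i x).hasFDerivAt.const_mul (l i))
  have h3 := h1.add h2
  have h4 : IsLocalMin ((fun y : H => ‖y - c0‖ ^ 2) + (fun y : H => ∑ i, l i * ℓ i y)) x :=
    Filter.Eventually.of_forall hmin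
  have h5 := h4.hasFDerivAt_eq_zero h3
  refine ext_inner_right ℝ fun z => ?_
  have h6 := congrArg (fun f => f z) h5
  simp at h6
  simp only [inner_add_left, inner_smul_left, sum_inner, inner_zero_left]
  simpa [inner_sub_left] using h6

lemma aux_dist {H : Type*} [NormedAddCommGroup H] [InnerProductSpace ℝ H]
    {m : ℕ} (c0 : H) (G : Fin m → H → H) (hGlip : ∀ i, LipschitzWith 2 (G i))
    (l1 l2 : Fin m → ℝ) (x1 x2 : H)
    (h1 : (2 : ℝ) • (x1 - c0) + ∑ i, l1 i • G i x1 = 0)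
    (h2 : (2 : ℝ) • (x2 - c0) + ∑ i, l2 i • G i x2 = 0)
    (σ : ℝ) (hσ : 0 < σ)
    (hred : ∀ v : Fin m → ℝ, σ * Real.sqrt (∑ i, v i ^ 2) ≤ ‖∑ i, v i • G i x2‖)
    (S : ℝ) (hS : ∑ i, |l1 i| ≤ S) :
    (σ / (1 + S)) ^ 2 * ∑ i, (l2 i - l1 i) ^ 2 ≤ 4 * ‖x2 - x1‖ ^ 2 := by
  have h0 : 0 ≤ ∑ i, |l1 i| := Finset.sum_nonneg fun i _ => abs_nonneg _
  have e : ∑ i, (l2 i - l1 i) • G i x2 =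
      - ((2 : ℝ) • (x2 - x1) + ∑ i, l1 i • (G i x2 - G i x1)) := by
    simp only [sub_smul, smul_sub, Finset.sum_sub_distrib] at *
    rw [eq_neg_iff_add_eq_zero]
    have : ∀ a b c d e f c' : H, a - c' + b = 0 → d - c' + e = 0 →
        (e - c + (d - a + (c - b))) = 0 := by
      intro a b c d e f c' h h'
      have : (e - c + (d - a + (c - b))) = (d - c' + e) - (a - c' + b) := by abel
      rw [this, h, h', sub_zero]
    exact this _ _ _ _ _ 0 _ h1 h2
  have b : ‖∑ i, (l2 i - l1 i) • G i x2‖ ≤ 2 * (1 + S) * ‖x2 - x1‖ := by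
    rw [e, norm_neg]
    refine (norm_add_le _ _).trans ?_
    have : ‖∑ i, l1 i • (G i x2 - G i x1)‖ ≤ (∑ i, |l1 i|) * (2 * ‖x2 - x1‖) := by
      rw [Finset.sum_mul]
      refine norm_sum_le_of_le _ fun i _ => ?_
      rw [norm_smul, Real.norm_eq_abs]
      have := (hGlip i).dist_le_mul x2 x1
      rw [dist_eq_norm, dist_eq_norm] at this
      exact mul_le_mul_of_nonneg_left (by simpa using this) (abs_nonneg _)
    rw [norm_smul]
    have h3 := mul_le_mul_of_nonneg_right hS (by positivity : 0 ≤ 2 * ‖x2 - x1‖)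
    norm_num
    linarith
  have c := (hred fun i => l2 i - l1 i).trans b
  have hn : 0 ≤ ∑ i, (l2 i - l1 i) ^ 2 := Finset.sum_nonneg fun i _ => sq_nonneg _
  have d := pow_le_pow_left₀ (by positivity) c 2
  rw [mul_pow, Real.sq_sqrt hn] at d
  have hp : 0 < 1 + S := by linarith
  rw [div_pow, div_mul_eq_mul_div, div_le_iff₀ (by positivity)]
  linarith

/-- in a real Hilbert space, with `ℓ₀(x) = ‖x − c₀‖²` and convex Fréchet
differentiable `ℓ₁, …, ℓ_m` whose gradients are 2-Lipschitz, if each Lagrangian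
`x ↦ ℓ₀(x) + ∑ i, λᵢ ℓᵢ(x)` (for `λ` in a convex set `Λ ⊆ ℝ₊ᵐ`) has a global minimizer
`x*(λ)`, and `‖∑ i, vᵢ ∇ℓᵢ(x*(λ))‖ ≥ σ‖v‖` for all `v` and `λ ∈ Λ`, then
`−(ℓ(x*(λ₂)) − ℓ(x*(λ₁)))ᵀ(λ₂ − λ₁) ≥ (1/2)(σ/(1 + ‖λ₁‖₁))² ‖λ₂ − λ₁‖²` for
`λ₁, λ₂ ∈ Λ`; consequently the dual function `g` is `μ`-strongly concave on `Λ` with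
`μ = (1/2)(σ/(1 + sup_{λ∈Λ} ‖λ‖₁))²` whenever `sup_{λ∈Λ} ‖λ‖₁ < ∞`. -/
theorem stmt14 {H : Type*} [NormedAddCommGroup H] [InnerProductSpace ℝ H]
    [CompleteSpace H] {m : ℕ} (c0 : H)
    (ℓ : Fin m → H → ℝ) (hℓcv : ∀ i, ConvexOn ℝ Set.univ (ℓ i))
    (G : Fin m → H → H) (hG : ∀ i x, HasGradientAt (ℓ i) (G i x) x)
    (hGlip : ∀ i, LipschitzWith 2 (G i))
    (Λ : Set (Fin m → ℝ)) (hΛ : ∀ l ∈ Λ, ∀ i, 0 ≤ l i) (hΛcv : Convex ℝ Λ)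
    (xstar : (Fin m → ℝ) → H)
    (hmin : ∀ l ∈ Λ, ∀ y : H,
      ‖xstar l - c0‖ ^ 2 + ∑ i, l i * ℓ i (xstar l) ≤ ‖y - c0‖ ^ 2 + ∑ i, l i * ℓ i y)
    (σ : ℝ) (hσ : 0 < σ)
    (hred : ∀ l ∈ Λ, ∀ v : Fin m → ℝ,
      σ * Real.sqrt (∑ i, v i ^ 2) ≤ ‖∑ i, v i • G i (xstar l)‖)
    (g : (Fin m → ℝ) → ℝ)
    (hg : ∀ l ∈ Λ, g l = ‖xstar l - c0‖ ^ 2 + ∑ i, l i * ℓ i (xstar l)) :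
    (∀ l1 ∈ Λ, ∀ l2 ∈ Λ,
      (1 / 2) * (σ / (1 + ∑ i, |l1 i|)) ^ 2 * ∑ i, (l2 i - l1 i) ^ 2
        ≤ -∑ i, (ℓ i (xstar l2) - ℓ i (xstar l1)) * (l2 i - l1 i)) ∧
    (BddAbove ((fun l => ∑ i, |l i|) '' Λ) →
      ∀ l1 ∈ Λ, ∀ l2 ∈ Λ, ∀ t : ℝ, 0 ≤ t → t ≤ 1 →
        t * g l1 + (1 - t) * g l2
            + ((1 / 2) * (σ / (1 + sSup ((fun l => ∑ i, |l i|) '' Λ))) ^ 2) / 2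
              * (t * (1 - t) * ∑ i, (l1 i - l2 i) ^ 2)
          ≤ g (t • l1 + (1 - t) • l2)) := by
  have st := fun l hl => aux_stat c0 ℓ G hG l (xstar l) (hmin l hl)
  have gr := fun l hl => aux_growth c0 ℓ hℓcv l (hΛ l hl) (xstar l) (hmin l hl)
  constructor
  · intro l1 h1 l2 h2
    have a := gr l1 h1 (xstar l2)
    have b := gr l2 h2 (xstar l1)
    have c := aux_dist c0 G hGlip l1 l2 _ _ (st l1 h1) (st l2 h2) σ hσ (hred l2 h2) _ le_rfl
    have e : -∑ i, (ℓ i (xstar l2) - ℓ i (xstar l1)) * (l2 i - l1 i) =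
        ∑ i, l1 i * ℓ i (xstar l2) - ∑ i, l1 i * ℓ i (xstar l1)
        + ∑ i, l2 i * ℓ i (xstar l1) - ∑ i, l2 i * ℓ i (xstar l2) := by
      rw [← Finset.sum_neg_distrib, ← Finset.sum_sub_distrib, ← Finset.sum_add_distrib,
        ← Finset.sum_sub_distrib]
      exact Finset.sum_congr rfl fun i _ => by ring
    rw [e]
    rw [norm_sub_rev (xstar l1) (xstar l2)] at b
    linarith
  · intro hb l1 h1 l2 h2 t ht0 ht1
    have h := hΛcv h1 h2 ht0 (by linarith : 0 ≤ 1 - t) (by ring)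
    set l := t • l1 + (1 - t) • l2 with hl
    set S := sSup ((fun l => ∑ i, |l i|) '' Λ) with hSdef
    have hS : ∀ l ∈ Λ, ∑ i, |l i| ≤ S := fun l hl => le_csSup hb ⟨l, hl, rfl⟩
    have a := gr l1 h1 (xstar l)
    have b := gr l2 h2 (xstar l)
    have c1 := aux_dist c0 G hGlip l1 l _ _ (st l1 h1) (st l h) σ hσ (hred l h) S (hS l1 h1)
    have c2 := aux_dist c0 G hGlip l2 l _ _ (st l2 h2) (st l h) σ hσ (hred l h) S (hS l2 h2)
    have e1 : ∑ i, (l i - l1 i) ^ 2 = (1 - t) ^ 2 * ∑ i, (l1 i - l2 i) ^ 2 := by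
      rw [Finset.mul_sum]
      exact Finset.sum_congr rfl fun i _ => by simp [hl]; ring
    have e2 : ∑ i, (l i - l2 i) ^ 2 = t ^ 2 * ∑ i, (l1 i - l2 i) ^ 2 := by
      rw [Finset.mul_sum]
      exact Finset.sum_congr rfl fun i _ => by simp [hl]; ring
    have e3 : ∑ i, l i * ℓ i (xstar l) =
        t * ∑ i, l1 i * ℓ i (xstar l) + (1 - t) * ∑ i, l2 i * ℓ i (xstar l) := by
      rw [Finset.mul_sum, Finset.mul_sum, ← Finset.sum_add_distrib]
      refine Finset.sum_congr rfl fun i _ => ?_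
      have : l i = t * l1 i + (1 - t) * l2 i := by simp [hl]
      rw [this]; ring
    rw [hg l1 h1, hg l2 h2, hg l h, e3]
    rw [e1] at c1
    rw [e2] at c2
    have ht' : 0 ≤ 1 - t := by linarith
    have A := mul_le_mul_of_nonneg_left a ht0
    have B := mul_le_mul_of_nonneg_left b ht'
    have C1 := mul_le_mul_of_nonneg_left c1 ht0
    have C2 := mul_le_mul_of_nonneg_left c2 ht'
    linarith
end

section
/- Let g, ḡ : ℝ₊ᵐ → ℝ with g(λ) ≤ ḡ(λ) ≤ g(λ) + 4R(1 + ‖λ‖₁)ν for all λ ∈ ℝ₊ᵐ, where R, ν ≥ 0. Let λ* ∈ ℝ₊ᵐ be a maximizer of g over ℝ₊ᵐ and λ̄* ∈ ℝ₊ᵐ a maximizer of ḡ over ℝ₊ᵐ. Suppose g is differentiable on the segment joining λ* and λ̄*, that g is μ-strongly concave on this segment with μ > 0, and that the first-order optimality condition ∇g(λ*)ᵀ(λ − λ*) ≤ 0 holds for all λ ∈ ℝ₊ᵐ. Then ‖λ̄* − λ*‖² ≤ (8/μ) R (1 + ‖λ̄*‖₁) ν. -/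
/-- let `g ≤ ḡ ≤ g + 4R(1 + ‖·‖₁)ν` on `ℝ₊ᵐ`, let `λ*` maximize `g` and
`λ̄*` maximize `ḡ` over `ℝ₊ᵐ`, suppose `g` is differentiable (with gradient `Dg`) and
`μ`-strongly concave on the segment joining `λ*` and `λ̄*`, and that the first-order
optimality condition `∇g(λ*)ᵀ(λ − λ*) ≤ 0` holds for all `λ ≥ 0`.  Then
`‖λ̄* − λ*‖² ≤ (8/μ) R (1 + ‖λ̄*‖₁) ν`. -/
theorem stmt15 {m : ℕ} (g gbar : (Fin m → ℝ) → ℝ) (R ν μ : ℝ)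
    (hR : 0 ≤ R) (hν : 0 ≤ ν) (hμ : 0 < μ)
    (hgap : ∀ l : Fin m → ℝ, (∀ i, 0 ≤ l i) →
      g l ≤ gbar l ∧ gbar l ≤ g l + 4 * R * (1 + ∑ i, |l i|) * ν)
    (lstar lbar : Fin m → ℝ) (hlstar : ∀ i, 0 ≤ lstar i) (hlbar : ∀ i, 0 ≤ lbar i)
    (hmaxg : ∀ l : Fin m → ℝ, (∀ i, 0 ≤ l i) → g l ≤ g lstar)
    (hmaxgbar : ∀ l : Fin m → ℝ, (∀ i, 0 ≤ l i) → gbar l ≤ gbar lbar)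
    (Dg : (Fin m → ℝ) → (Fin m → ℝ))
    (hdiff : ∀ l ∈ segment ℝ lstar lbar,
      HasFDerivAt g (∑ i, Dg l i • (ContinuousLinearMap.proj i : (Fin m → ℝ) →L[ℝ] ℝ)) l)
    (hconc : ∀ l1 ∈ segment ℝ lstar lbar, ∀ l2 ∈ segment ℝ lstar lbar,
      g l2 ≤ g l1 + ∑ i, Dg l1 i * (l2 i - l1 i) - μ / 2 * ∑ i, (l2 i - l1 i) ^ 2)
    (hfoc : ∀ l : Fin m → ℝ, (∀ i, 0 ≤ l i) → ∑ i, Dg lstar i * (l i - lstar i) ≤ 0) :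
    ∑ i, (lbar i - lstar i) ^ 2 ≤ (8 / μ) * R * (1 + ∑ i, |lbar i|) * ν := by
  have h1 := hconc lstar (left_mem_segment ℝ _ _) lbar (right_mem_segment ℝ _ _)
  have h2 := hfoc lbar hlbar
  have h3 := (hgap lbar hlbar).2
  have h4 := (hgap lstar hlstar).1
  have h5 := hmaxgbar lstar hlstar
  have e : (8 / μ) * R * (1 + ∑ i, |lbar i|) * ν
      = (8 * R * (1 + ∑ i, |lbar i|) * ν) / μ := by ring
  rw [e, le_div_iff₀ hμ]
  linarith
end

section
/- Let (Ω, 𝒜, μ) be a measure space, let w₀, …, w_m : Ω → [0, 1] be measurable weight functions, let c₀, …, c_m ∈ L²(μ) with ‖cᵢ‖_{L²(μ)} ≤ R, and define ℓᵢ(s) = ∫ wᵢ |s − cᵢ|² dμ for s ∈ L²(μ). Let S ⊆ {s ∈ L²(μ) : ‖s‖_{L²(μ)} ≤ R} and let T ⊆ S satisfy: for every s ∈ S there exists t ∈ T with ‖s − t‖_{L²(μ)} ≤ ν. Then for every λ ∈ ℝ₊ᵐ and b ∈ ℝᵐ, writing L(s, λ) = ℓ₀(s) + Σᵢ λᵢ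 (ℓᵢ(s) − bᵢ), one has 0 ≤ inf_{t ∈ T} L(t, λ) − inf_{s ∈ S} L(s, λ) ≤ 4R(1 + ‖λ‖₁)ν. -/
open MeasureTheory

theorem stmt16_integrable {Ω : Type*} [MeasurableSpace Ω] (μ : Measure Ω)
    (w : Ω → ℝ) (hwm : Measurable w) (hw : ∀ x, w x ∈ Set.Icc (0 : ℝ) 1)
    (c s : Lp ℝ 2 μ) : Integrable (fun x => w x * (s x - c x) ^ 2) μ := by
  have h : MemLp (fun x => s x - c x) 2 μ := (Lp.memLp s).sub (Lp.memLp c)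
  refine h.integrable_sq.bdd_mul (c := 1) hwm.aestronglyMeasurable ?_
  refine Filter.Eventually.of_forall fun x => ?_
  rw [Real.norm_eq_abs, abs_le]
  exact ⟨by linarith [(hw x).1], (hw x).2⟩

theorem stmt16_loss {Ω : Type*} [MeasurableSpace Ω] (μ : Measure Ω)
    (w : Ω → ℝ) (hwm : Measurable w) (hw : ∀ x, w x ∈ Set.Icc (0 : ℝ) 1)
    (R ν : ℝ) (hν : 0 ≤ ν) (c s t : Lp ℝ 2 μ) (hc : ‖c‖ ≤ R) (hs : ‖s‖ ≤ R) (ht : ‖t‖ ≤ R)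
    (hst : ‖s - t‖ ≤ ν) :
    (∫ x, w x * (t x - c x) ^ 2 ∂μ) ≤ (∫ x, w x * (s x - c x) ^ 2 ∂μ) + 4 * R * ν := by
  have hi := stmt16_integrable μ w hwm hw c
  have hu : ‖(t - c) + (s - c)‖ ≤ 4 * R := by
    have h1 := norm_add_le (t - c) (s - c)
    have h2 := norm_sub_le t c
    have h3 := norm_sub_le s c
    linarith
  have hin : inner ℝ |s - t| |(t - c) + (s - c)| ≤ 4 * R * ν := by
    refine (real_inner_le_norm _ _).trans ?_
    rw [norm_abs_eq_norm, norm_abs_eq_norm, mul_comm]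
    exact mul_le_mul hu hst (norm_nonneg _) ((norm_nonneg _).trans hu)
  have hint := L2.integrable_inner (𝕜 := ℝ) |s - t| |(t - c) + (s - c)|
  have key : (∫ x, (w x * (t x - c x) ^ 2 - w x * (s x - c x) ^ 2) ∂μ)
      ≤ inner ℝ |s - t| |(t - c) + (s - c)| := by
    rw [L2.inner_def]
    refine integral_mono_ae ((hi t).sub (hi s)) hint ?_
    filter_upwards [Lp.coeFn_abs (s - t), Lp.coeFn_abs ((t - c) + (s - c)),
      Lp.coeFn_sub s t, Lp.coeFn_add (t - c) (s - c), Lp.coeFn_sub t c, Lp.coeFn_sub s c]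
      with x h1 h2 h3 h4 h5 h6
    rw [h1, h2, h3, h4]
    simp only [Pi.sub_apply, Pi.add_apply, h5, h6, RCLike.inner_apply, conj_trivial, RCLike.re_to_real]
    rw [← abs_mul, mul_comm (t x - c x + (s x - c x))]
    have e : w x * (t x - c x) ^ 2 - w x * (s x - c x) ^ 2
        = w x * (-((s x - t x) * (t x - c x + (s x - c x)))) := by ring
    rw [e]
    obtain ⟨h0, h1'⟩ := hw x
    have := neg_le_abs ((s x - t x) * (t x - c x + (s x - c x)))
    calc _ ≤ w x * |(s x - t x) * (t x - c x + (s x - c x))| :=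
          mul_le_mul_of_nonneg_left this h0
      _ ≤ _ := mul_le_of_le_one_left (abs_nonneg _) h1'
  rw [integral_sub (hi t) (hi s)] at key
  linarith

theorem stmt16_inf {E : Type*} (L : E → ℝ) (S T : Set E) (B C : ℝ) (hC : 0 ≤ C) (hTS : T ⊆ S)
    (hB : ∀ s ∈ S, B ≤ L s) (h : ∀ s ∈ S, ∃ t ∈ T, L t ≤ L s + C) :
    0 ≤ sInf (L '' T) - sInf (L '' S) ∧ sInf (L '' T) - sInf (L '' S) ≤ C := by
  have hb : BddBelow (L '' S) := ⟨B, by rintro _ ⟨s, hs, rfl⟩; exact hB s hs⟩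
  have hbT : BddBelow (L '' T) := hb.mono (Set.image_mono hTS)
  rcases S.eq_empty_or_nonempty with rfl | ⟨s0, hs0⟩
  · obtain rfl := Set.subset_empty_iff.1 hTS
    simpa using hC
  · obtain ⟨t0, ht0, -⟩ := h s0 hs0
    constructor
    · exact sub_nonneg.2 (csInf_le_csInf hb ⟨_, t0, ht0, rfl⟩ (Set.image_mono hTS))
    · have : sInf (L '' T) - C ≤ sInf (L '' S) := by
        refine le_csInf ⟨_, s0, hs0, rfl⟩ ?_
        rintro _ ⟨s, hs, rfl⟩
        obtain ⟨t, ht, hts⟩ := h s hs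
        have := csInf_le hbT ⟨t, ht, rfl⟩
        linarith
      linarith

/-- parametrization gap in `L²`: with weighted quadratic losses
`ℓᵢ(s) = ∫ wᵢ |s − cᵢ|² dμ` on `L²(μ)`, `‖cᵢ‖ ≤ R`, a set `S` contained in the ball of
radius `R` and a `ν`-dense subset `T ⊆ S`, for every `λ ≥ 0` and `b` the Lagrangian
`L(s, λ) = ℓ₀(s) + ∑ i, λᵢ (ℓᵢ(s) − bᵢ)` satisfies
`0 ≤ inf_{t ∈ T} L(t, λ) − inf_{s ∈ S} L(s, λ) ≤ 4R(1 + ‖λ‖₁)ν`. -/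
theorem stmt16 {Ω : Type*} [MeasurableSpace Ω] (μ : Measure Ω) {m : ℕ}
    (w0 : Ω → ℝ) (w : Fin m → Ω → ℝ)
    (hw0m : Measurable w0) (hwm : ∀ i, Measurable (w i))
    (hw0 : ∀ x, w0 x ∈ Set.Icc (0 : ℝ) 1) (hw : ∀ i, ∀ x, w i x ∈ Set.Icc (0 : ℝ) 1)
    (R ν : ℝ) (hν : 0 ≤ ν)
    (c0 : Lp ℝ 2 μ) (c : Fin m → Lp ℝ 2 μ)
    (hc0 : ‖c0‖ ≤ R) (hc : ∀ i, ‖c i‖ ≤ R)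
    (S T : Set (Lp ℝ 2 μ)) (hS : ∀ s ∈ S, ‖s‖ ≤ R) (hTS : T ⊆ S)
    (happrox : ∀ s ∈ S, ∃ t ∈ T, ‖s - t‖ ≤ ν)
    (l : Fin m → ℝ) (hl : ∀ i, 0 ≤ l i) (b : Fin m → ℝ) :
    0 ≤ sInf ((fun t : Lp ℝ 2 μ =>
          (∫ x, w0 x * (t x - c0 x) ^ 2 ∂μ)
            + ∑ i, l i * ((∫ x, w i x * (t x - c i x) ^ 2 ∂μ) - b i)) '' T)
        - sInf ((fun s : Lp ℝ 2 μ =>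
          (∫ x, w0 x * (s x - c0 x) ^ 2 ∂μ)
            + ∑ i, l i * ((∫ x, w i x * (s x - c i x) ^ 2 ∂μ) - b i)) '' S) ∧
    sInf ((fun t : Lp ℝ 2 μ =>
          (∫ x, w0 x * (t x - c0 x) ^ 2 ∂μ)
            + ∑ i, l i * ((∫ x, w i x * (t x - c i x) ^ 2 ∂μ) - b i)) '' T)
        - sInf ((fun s : Lp ℝ 2 μ =>
          (∫ x, w0 x * (s x - c0 x) ^ 2 ∂μ)
            + ∑ i, l i * ((∫ x, w i x * (s x - c i x) ^ 2 ∂μ) - b i)) '' S)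
      ≤ 4 * R * (1 + ∑ i, |l i|) * ν := by
  have hR : 0 ≤ R := (norm_nonneg _).trans hc0
  have hpos : ∀ (v : Ω → ℝ), (∀ x, v x ∈ Set.Icc (0 : ℝ) 1) → ∀ (d s : Lp ℝ 2 μ),
      0 ≤ ∫ x, v x * (s x - d x) ^ 2 ∂μ := fun v hv d s =>
    integral_nonneg fun x => mul_nonneg (hv x).1 (sq_nonneg _)
  have hsum : 0 ≤ ∑ i, |l i| := Finset.sum_nonneg fun i _ => abs_nonneg _
  refine stmt16_inf _ S T (∑ i, l i * (0 - b i)) _ (by positivity) hTS ?_ ?_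
  · intro s _
    have h1 := hpos w0 hw0 c0 s
    have h2 : ∑ i, l i * (0 - b i)
        ≤ ∑ i, l i * ((∫ x, w i x * (s x - c i x) ^ 2 ∂μ) - b i) :=
      Finset.sum_le_sum fun i _ => mul_le_mul_of_nonneg_left
        (sub_le_sub_right (hpos (w i) (hw i) (c i) s) _) (hl i)
    linarith
  · intro s hs
    obtain ⟨t, ht, hst⟩ := happrox s hs
    refine ⟨t, ht, ?_⟩
    have h1 := stmt16_loss μ w0 hw0m hw0 R ν hν c0 s t hc0 (hS s hs) (hS t (hTS ht)) hst
    have h2 : ∑ i, l i * ((∫ x, w i x * (t x - c i x) ^ 2 ∂μ) - b i)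
        ≤ ∑ i, (l i * ((∫ x, w i x * (s x - c i x) ^ 2 ∂μ) - b i) + |l i| * (4 * R * ν)) := by
      refine Finset.sum_le_sum fun i _ => ?_
      have h3 := stmt16_loss μ (w i) (hwm i) (hw i) R ν hν (c i) s t (hc i) (hS s hs)
        (hS t (hTS ht)) hst
      have h4 := mul_le_mul_of_nonneg_left h3 (hl i)
      rw [abs_of_nonneg (hl i)]
      linarith
    rw [Finset.sum_add_distrib, ← Finset.sum_mul] at h2
    linarith
end

section
/- Let (Ω, 𝔽, ℙ) be a probability space and 𝒢 ⊆ 𝔽 a sub-σ-algebra. Let λ̄* ∈ ℝ₊ᵐ, let ḡ : ℝ₊ᵐ → ℝ, let λ be a 𝒢-measurable random vector with values in ℝ₊ᵐ, and let f̂ be an integrable random vector in ℝᵐ satisfying, almost surely: 𝔼[‖f̂‖² | 𝒢] ≤ S² and 𝔼[f̂ | 𝒢]ᵀ(λ − λ̄*) − ε² ≤ ḡ(λ) − ḡ(λ̄*). Let η > 0 and define the projected stochastic ascent update λ⁺ componentwise by λ⁺ᵢ = max(0, λᵢ + η f̂ᵢ). Then almost surely 𝔼[‖λ⁺ − λ̄*‖²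 | 𝒢] ≤ ‖λ − λ̄*‖² + η² S² − 2η (ḡ(λ̄*) − ḡ(λ) − ε²). -/
open MeasureTheory

/-- one step of projected stochastic dual ascent: on a probability space
with sub-σ-algebra `𝒢`, if `λ` is `𝒢`-measurable with values in `ℝ₊ᵐ`, `λ̄* ∈ ℝ₊ᵐ`,
`f̂` is square-integrable with `𝔼[‖f̂‖² | 𝒢] ≤ S²` a.s. and the approximate supergradient
inequality `𝔼[f̂ | 𝒢]ᵀ(λ − λ̄*) − ε² ≤ ḡ(λ) − ḡ(λ̄*)` a.s., then the projected update
`λ⁺ᵢ = max(0, λᵢ + η f̂ᵢ)` satisfies a.s.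
`𝔼[‖λ⁺ − λ̄*‖² | 𝒢] ≤ ‖λ − λ̄*‖² + η² S² − 2η (ḡ(λ̄*) − ḡ(λ) − ε²)`. -/
theorem stmt17 {Ω : Type*} {m0 : MeasurableSpace Ω} (μ : Measure Ω)
    [IsProbabilityMeasure μ]
    (mG : MeasurableSpace Ω) (hmG : mG ≤ m0) {m : ℕ}
    (lbar : Fin m → ℝ) (hlbar : ∀ i, 0 ≤ lbar i)
    (gbar : (Fin m → ℝ) → ℝ)
    (lam : Ω → Fin m → ℝ) (hlamMeas : Measurable[mG] lam)
    (hlamPos : ∀ ω i, 0 ≤ lam ω i)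
    (fhat : Ω → Fin m → ℝ)
    (hInt : ∀ i, Integrable (fun ω => fhat ω i) μ)
    (hInt2 : Integrable (fun ω => ∑ i, fhat ω i ^ 2) μ)
    (S ε η : ℝ) (hη : 0 < η)
    (hmom : ∀ᵐ ω ∂μ, (μ[fun ω' => ∑ i, fhat ω' i ^ 2 | mG]) ω ≤ S ^ 2)
    (hgrad : ∀ᵐ ω ∂μ,
      (∑ i, (μ[fun ω' => fhat ω' i | mG]) ω * (lam ω i - lbar i)) - ε ^ 2
        ≤ gbar (lam ω) - gbar lbar) :
    ∀ᵐ ω ∂μ,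
      (μ[fun ω' => ∑ i, (max 0 (lam ω' i + η * fhat ω' i) - lbar i) ^ 2 | mG]) ω
        ≤ ∑ i, (lam ω i - lbar i) ^ 2 + η ^ 2 * S ^ 2
            - 2 * η * (gbar lbar - gbar (lam ω) - ε ^ 2) := by
  classical
  have hfae : ∀ i, AEStronglyMeasurable[m0] (fun ω => fhat ω i) μ := fun i => (hInt i).1
  have hf2 : ∀ i, Integrable (fun ω => fhat ω i ^ 2) μ := by
    intro i
    refine hInt2.mono ((hfae i).pow 2) (ae_of_all _ fun ω => ?_)
    have h0 : ∀ j ∈ Finset.univ, 0 ≤ fhat ω j ^ 2 := fun j _ => sq_nonneg _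
    rw [Real.norm_of_nonneg (sq_nonneg _), Real.norm_of_nonneg (Finset.sum_nonneg h0)]
    exact Finset.single_le_sum h0 (Finset.mem_univ i)
  have hfL : ∀ i, MemLp (fun ω => fhat ω i) 2 μ := fun i =>
    (memLp_two_iff_integrable_sq (hfae i)).2 (hf2 i)
  have hdG : ∀ i, StronglyMeasurable[mG] (fun ω => lam ω i - lbar i) := fun i =>
    (((measurable_pi_apply i).comp hlamMeas).sub_const (lbar i)).stronglyMeasurable
  have hlG : ∀ i, StronglyMeasurable[mG] (fun ω => lam ω i) := fun i =>
    ((measurable_pi_apply i).comp hlamMeas).stronglyMeasurable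
  by_cases hX : Integrable
      (fun ω' => ∑ i, (max 0 (lam ω' i + η * fhat ω' i) - lbar i) ^ 2) μ
  · -- all terms are integrable
    have hlae : ∀ i, AEStronglyMeasurable[m0] (fun ω => lam ω i) μ := fun i =>
      ((hlG i).mono hmG).aestronglyMeasurable
    have hpae : ∀ i, AEStronglyMeasurable[m0]
        (fun ω => max 0 (lam ω i + η * fhat ω i) - lbar i) μ := fun i =>
      (aestronglyMeasurable_const.sup ((hlae i).add ((hfae i).const_mul η))).sub
        aestronglyMeasurable_const
    have hp2 : ∀ i, Integrable
        (fun ω => (max 0 (lam ω i + η * fhat ω i) - lbar i) ^ 2) μ := by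
      intro i
      refine hX.mono ((hpae i).pow 2) (ae_of_all _ fun ω => ?_)
      have h0 : ∀ j ∈ Finset.univ,
          0 ≤ (max 0 (lam ω j + η * fhat ω j) - lbar j) ^ 2 := fun j _ => sq_nonneg _
      rw [Real.norm_of_nonneg (sq_nonneg _), Real.norm_of_nonneg (Finset.sum_nonneg h0)]
      exact Finset.single_le_sum h0 (Finset.mem_univ i)
    have hpL : ∀ i, MemLp (fun ω => max 0 (lam ω i + η * fhat ω i) - lbar i) 2 μ := fun i =>
      (memLp_two_iff_integrable_sq (hpae i)).2 (hp2 i)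
    have hlL : ∀ i, MemLp (fun ω => lam ω i) 2 μ := by
      intro i
      refine (((hpL i).add (memLp_const (lbar i))).sub ((hfL i).const_mul η)).mono
        (hlae i) (ae_of_all _ fun ω => ?_)
      rw [Real.norm_of_nonneg (hlamPos ω i)]
      refine le_trans ?_ (Real.le_norm_self _)
      simp only [Pi.sub_apply, Pi.add_apply]
      linarith [le_max_right 0 (lam ω i + η * fhat ω i)]
    have hdL : ∀ i, MemLp (fun ω => lam ω i - lbar i) 2 μ := fun i =>
      (hlL i).sub (memLp_const (lbar i))
    have hdf : ∀ i, Integrable ((fun ω => fhat ω i) * (fun ω => lam ω i - lbar i)) μ :=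
      fun i => (hfL i).integrable_mul (hdL i)
    have hD : Integrable (fun ω => ∑ i, (lam ω i - lbar i) ^ 2) μ :=
      integrable_finset_sum _ fun i _ => (hdL i).integrable_sq
    have hC : Integrable
        (∑ i, (fun ω => fhat ω i) * (fun ω => lam ω i - lbar i)) μ :=
      integrable_finset_sum' _ fun i _ => hdf i
    have hDG : StronglyMeasurable[mG] (fun ω => ∑ i, (lam ω i - lbar i) ^ 2) :=
      Finset.stronglyMeasurable_fun_sum _ fun i _ => (hdG i).pow 2
    have hle := condExp_mono (m := mG) hX
      ((hD.add (hC.smul (2 * η))).add (hInt2.smul (η ^ 2))) (ae_of_all _ fun ω => by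
        simp only [Pi.add_apply, Pi.smul_apply, Finset.sum_apply, Pi.mul_apply, smul_eq_mul,
          Finset.mul_sum, ← Finset.sum_add_distrib]
        refine Finset.sum_le_sum fun i _ => ?_
        have hb := hlbar i
        rcases le_total 0 (lam ω i + η * fhat ω i) with h | h
        · rw [max_eq_right h]
          exact le_of_eq (by ring)
        · rw [max_eq_left h]
          nlinarith [mul_nonneg hb (neg_nonneg.2 h), sq_nonneg (lam ω i + η * fhat ω i)])
    have h1 := condExp_add (hD.add (hC.smul (2 * η))) (hInt2.smul (η ^ 2)) mG
    have h2 := condExp_add hD (hC.smul (2 * η)) mG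
    have h3 := condExp_smul (μ := μ) (2 * η)
      (∑ i, (fun ω => fhat ω i) * (fun ω => lam ω i - lbar i)) mG
    have h4 := condExp_smul (μ := μ) (η ^ 2) (fun ω => ∑ i, fhat ω i ^ 2) mG
    have h5 := condExp_finset_sum (s := Finset.univ) (fun i _ => hdf i) mG
    have h6 : ∀ᵐ ω ∂μ, ∀ i, (μ[(fun ω => fhat ω i) * (fun ω => lam ω i - lbar i) | mG]) ω
        = (μ[fun ω => fhat ω i | mG]) ω * (lam ω i - lbar i) :=
      ae_all_iff.2 fun i =>
        condExp_mul_of_stronglyMeasurable_right (hdG i) (hdf i) (hInt i)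
    have h7 := condExp_of_stronglyMeasurable hmG hDG hD
    filter_upwards [hle, h1, h2, h3, h4, h5, h6, hmom, hgrad] with
      ω hle h1 h2 h3 h4 h5 h6 hm hg
    refine hle.trans ?_
    rw [h1, Pi.add_apply, h2, Pi.add_apply, h3, h4, h7, Pi.smul_apply, Pi.smul_apply, h5,
      Finset.sum_apply, Finset.sum_congr rfl fun i _ => h6 i, smul_eq_mul, smul_eq_mul]
    nlinarith [mul_le_mul_of_nonneg_left hm (sq_nonneg η), mul_le_mul_of_nonneg_left hg hη.le]
  · -- the conditional expectation is zero by convention; the bound is nonnegative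
    rw [condExp_of_not_integrable hX]
    have hv : ∀ᵐ ω ∂μ, ∀ i, ((μ[fun ω => fhat ω i | mG]) ω) ^ 2
        ≤ (μ[fun ω => fhat ω i ^ 2 | mG]) ω := by
      refine ae_all_iff.2 fun i => ?_
      have hnn : 0 ≤ᵐ[μ] ProbabilityTheory.condVar mG (fun ω => fhat ω i) μ :=
        condExp_nonneg (ae_of_all _ fun ω => sq_nonneg _)
      filter_upwards [hnn,
        ProbabilityTheory.condVar_ae_eq_condExp_sq_sub_sq_condExp hmG (hfL i)] with ω h h'
      rw [h'] at h
      exact sub_nonneg.1 h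
    have hs := condExp_finset_sum (s := Finset.univ) (fun i _ => hf2 i) mG
    have hs' : (∑ i, fun ω => fhat ω i ^ 2) = fun ω => ∑ i, fhat ω i ^ 2 := by
      ext ω
      simp
    rw [hs'] at hs
    filter_upwards [hv, hs, hmom, hgrad] with ω hv hs hm hg
    rw [hs, Finset.sum_apply] at hm
    have hE := (Finset.sum_le_sum fun i (_ : i ∈ Finset.univ) => hv i).trans hm
    have hsq : 0 ≤ ∑ i, ((lam ω i - lbar i) + η * (μ[fun ω => fhat ω i | mG]) ω) ^ 2 :=
      Finset.sum_nonneg fun i _ => sq_nonneg _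
    have hex : ∑ i, ((lam ω i - lbar i) + η * (μ[fun ω => fhat ω i | mG]) ω) ^ 2
        = ∑ i, (lam ω i - lbar i) ^ 2
          + 2 * η * ∑ i, (μ[fun ω => fhat ω i | mG]) ω * (lam ω i - lbar i)
          + η ^ 2 * ∑ i, ((μ[fun ω => fhat ω i | mG]) ω) ^ 2 := by
      simp only [Finset.mul_sum, ← Finset.sum_add_distrib]
      exact Finset.sum_congr rfl fun i _ => by ring
    rw [hex] at hsq
    simp only [Pi.zero_apply]
    nlinarith [mul_le_mul_of_nonneg_left hE (sq_nonneg η), mul_le_mul_of_nonneg_left hg hη.le]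
end

section
/- Let (Ω, 𝔽, ℙ) be a probability space with a filtration (𝔽_h)_{h≥1}. Let ḡ : ℝ₊ᵐ → ℝ attain its supremum D̄* over ℝ₊ᵐ at λ̄* ∈ ℝ₊ᵐ. Let (λ(h))_{h≥1} be an (𝔽_h)-adapted process in ℝ₊ᵐ generated by λᵢ(h+1) = max(0, λᵢ(h) + η f̂ᵢ(h)), where for every h, almost surely 𝔼[‖f̂(h)‖² | 𝔽_h] ≤ S² and 𝔼[f̂(h) | 𝔽_h]ᵀ(λ(h) − λ̄*) − ε² ≤ ḡ(λ(h)) − ḡ(λ̄*). Then almost surely sup_{h≥1} ḡ(λ(h)) ≥ D̄* − (η S²/2 + ε²); equivalently, the running maximum ḡ_best(h) = max_{h′ ≤ h} ḡ(λ(h′)) satisfies lim_{h→∞} ḡ_best(h) ≥ D̄* − (η S²/2 + ε²) almost surely. -/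
open MeasureTheory

lemma aux_step {Ω : Type*} {m m0 : MeasurableSpace Ω} (μ : Measure Ω)
    [IsProbabilityMeasure μ] (hm : m ≤ m0) {n : ℕ} (X f : Fin n → Ω → ℝ)
    (hX : ∀ i, StronglyMeasurable[m] (X i)) (A : Set Ω) (hA : MeasurableSet[m] A)
    (hV : IntegrableOn (fun ω => ∑ i, X i ω ^ 2) A μ)
    (hf : ∀ i, Integrable (f i) μ) (hf2 : Integrable (fun ω => ∑ i, f i ω ^ 2) μ)
    (η S δ : ℝ) (hη : 0 < η)
    (hmom : ∀ᵐ ω ∂μ, (μ[fun ω' => ∑ i, f i ω' ^ 2 | m]) ω ≤ S ^ 2)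
    (hip : ∀ ω ∈ A, ∑ i, (μ[f i | m]) ω * X i ω ≤ -(η * S ^ 2 / 2) - δ)
    (W : Ω → ℝ) (hWm : AEStronglyMeasurable W μ) (hW0 : ∀ ω, 0 ≤ W ω)
    (hW : ∀ ω, W ω ≤ ∑ i, (X i ω + η * f i ω) ^ 2) :
    IntegrableOn W A μ ∧
      ∫ ω in A, W ω ∂μ ≤ ∫ ω in A, (∑ i, X i ω ^ 2) ∂μ - 2 * η * δ * μ.real A := by
  have hA0 : MeasurableSet A := hm A hA
  have hYm : ∀ i, StronglyMeasurable[m] (A.indicator (X i)) := fun i => (hX i).indicator hA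
  have hY2 : ∀ i, MemLp (A.indicator (X i)) 2 μ := by
    intro i
    rw [memLp_two_iff_integrable_sq ((hYm i).mono hm).aestronglyMeasurable]
    have h1 := (integrable_indicator_iff hA0).2 hV
    refine h1.mono' (((hYm i).mono hm).aestronglyMeasurable.pow 2) (ae_of_all _ fun ω => ?_)
    by_cases hω : ω ∈ A
    · simp only [Set.indicator_of_mem hω, Real.norm_eq_abs, abs_pow, sq_abs]
      exact Finset.single_le_sum (f := fun i => X i ω ^ 2) (fun j _ => sq_nonneg _)
        (Finset.mem_univ i)
    · simp [Set.indicator_of_notMem hω]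
  have hfL : ∀ i, MemLp (f i) 2 μ := by
    intro i
    rw [memLp_two_iff_integrable_sq (hf i).aestronglyMeasurable]
    refine hf2.mono' ((hf i).aestronglyMeasurable.pow 2) (ae_of_all _ fun ω => ?_)
    simp only [Real.norm_eq_abs, abs_pow, sq_abs]
    exact Finset.single_le_sum (f := fun i => f i ω ^ 2) (fun j _ => sq_nonneg _)
        (Finset.mem_univ i)
  have hYf : ∀ i, Integrable (A.indicator (X i) * f i) μ := fun i => (hY2 i).integrable_mul (hfL i)
  have hpull : ∀ i, μ[A.indicator (X i) * f i | m] =ᵐ[μ] A.indicator (X i) * μ[f i | m] :=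
    fun i => condExp_mul_of_stronglyMeasurable_left (hYm i) (hYf i) (hf i)
  have hYc : ∀ i, Integrable (A.indicator (X i) * μ[f i | m]) μ :=
    fun i => integrable_condExp.congr (hpull i)
  have hXf : IntegrableOn (fun ω => ∑ i, X i ω * f i ω) A μ := by
    refine integrable_finsetSum _ fun i _ => ?_
    refine (hYf i).integrableOn.congr_fun (s := A) (fun ω hω => ?_) hA0
    simp [Set.indicator_of_mem hω]
  have hcross : ∫ ω in A, (∑ i, X i ω * f i ω) ∂μ ≤ (-(η * S ^ 2 / 2) - δ) * μ.real A := by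
    have e1 : ∫ ω in A, (∑ i, X i ω * f i ω) ∂μ = ∫ ω, ∑ i, (A.indicator (X i) * f i) ω ∂μ := by
      rw [← integral_indicator hA0]
      congr 1
      ext ω
      by_cases hω : ω ∈ A <;> simp [hω]
    have e2 : ∫ ω, ∑ i, (A.indicator (X i) * f i) ω ∂μ
        = ∫ ω, ∑ i, (A.indicator (X i) * μ[f i | m]) ω ∂μ := by
      rw [integral_finsetSum _ (fun i _ => hYf i), integral_finsetSum _ (fun i _ => hYc i)]
      refine Finset.sum_congr rfl fun i _ => ?_
      rw [← integral_condExp hm]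
      exact integral_congr_ae (hpull i)
    have e3 : ∫ ω, A.indicator (fun _ => (-(η * S ^ 2 / 2) - δ)) ω ∂μ
        = (-(η * S ^ 2 / 2) - δ) * μ.real A := by
      rw [integral_indicator hA0, setIntegral_const, smul_eq_mul, mul_comm]
    rw [e1, e2, ← e3]
    refine integral_mono (integrable_finsetSum _ fun i _ => hYc i)
      ((integrable_const _).indicator hA0) fun ω => ?_
    by_cases hω : ω ∈ A
    · have := hip ω hω
      simp only [Pi.mul_apply, Set.indicator_of_mem hω]
      simpa only [mul_comm] using this
    · simp [hω]
  have hsq : ∫ ω in A, (∑ i, f i ω ^ 2) ∂μ ≤ S ^ 2 * μ.real A := by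
    rw [← setIntegral_condExp hm hf2 hA]
    calc _ ≤ ∫ ω in A, S ^ 2 ∂μ :=
          integral_mono_ae integrable_condExp.integrableOn (integrable_const _)
            (ae_restrict_of_ae hmom)
      _ = _ := by rw [setIntegral_const, smul_eq_mul, mul_comm]
  have hexp : ∀ ω, ∑ i, (X i ω + η * f i ω) ^ 2
      = (∑ i, X i ω ^ 2) + (2 * η) * (∑ i, X i ω * f i ω) + η ^ 2 * ∑ i, f i ω ^ 2 := by
    intro ω
    rw [Finset.mul_sum, Finset.mul_sum, ← Finset.sum_add_distrib, ← Finset.sum_add_distrib]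
    refine Finset.sum_congr rfl fun i _ => ?_
    ring
  have hi2 := hXf.const_mul (2 * η)
  have hi3 := (hf2.integrableOn (s := A)).const_mul (η ^ 2)
  have hi12 := hV.add hi2
  have hI := hi12.add hi3
  have hWb : ∀ ω, W ω ≤ (∑ i, X i ω ^ 2) + (2 * η) * (∑ i, X i ω * f i ω)
      + η ^ 2 * ∑ i, f i ω ^ 2 := fun ω => (hW ω).trans (hexp ω).le
  have hWI : IntegrableOn W A μ := by
    refine hI.mono' hWm.restrict (ae_of_all _ fun ω => ?_)
    rw [Real.norm_eq_abs, abs_of_nonneg (hW0 ω)]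
    exact hWb ω
  refine ⟨hWI, ?_⟩
  have h1 : ∫ ω in A, W ω ∂μ ≤ ∫ ω in A, ((∑ i, X i ω ^ 2) + (2 * η) * (∑ i, X i ω * f i ω)
      + η ^ 2 * ∑ i, f i ω ^ 2) ∂μ := integral_mono hWI hI hWb
  have h2 : ∫ ω in A, ((∑ i, X i ω ^ 2) + (2 * η) * (∑ i, X i ω * f i ω)
      + η ^ 2 * ∑ i, f i ω ^ 2) ∂μ = ∫ ω in A, (∑ i, X i ω ^ 2) ∂μ
      + (2 * η) * ∫ ω in A, (∑ i, X i ω * f i ω) ∂μ + η ^ 2 * ∫ ω in A, (∑ i, f i ω ^ 2) ∂μ := by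
    rw [integral_add (f := fun ω => (∑ i, X i ω ^ 2) + (2 * η) * (∑ i, X i ω * f i ω)) hi12 hi3,
      integral_add hV hi2, integral_const_mul, integral_const_mul]
  have h3 := mul_le_mul_of_nonneg_left hcross (by positivity : 0 ≤ 2 * η)
  have h4 := mul_le_mul_of_nonneg_left hsq (by positivity : 0 ≤ η ^ 2)
  rw [h2] at h1
  nlinarith

lemma aux_proj (a l : ℝ) (hl : 0 ≤ l) : (max 0 a - l) ^ 2 ≤ (a - l) ^ 2 := by
  rcases le_total 0 a with h | h
  · rw [max_eq_right h]
  · rw [max_eq_left h]; nlinarith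

/-- convergence of the running maximum of the dual values: let `ḡ` attain
its supremum `D̄*` over `ℝ₊ᵐ` at `λ̄*`, and let `(λ(h))` be an adapted process in `ℝ₊ᵐ`
generated by the projected stochastic ascent update `λᵢ(h+1) = max(0, λᵢ(h) + η f̂ᵢ(h))`
with conditionally bounded second moments `𝔼[‖f̂(h)‖² | 𝔽_h] ≤ S²` and the approximate
supergradient inequality `𝔼[f̂(h) | 𝔽_h]ᵀ(λ(h) − λ̄*) − ε² ≤ ḡ(λ(h)) − ḡ(λ̄*)` a.s.
Then almost surely `sup_{h ≥ 1} ḡ(λ(h)) ≥ D̄* − (η S²/2 + ε²)`. -/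
theorem stmt18 {Ω : Type*} {m0 : MeasurableSpace Ω} (μ : Measure Ω)
    [IsProbabilityMeasure μ] (ℱ : Filtration ℕ m0) {m : ℕ}
    (gbar : (Fin m → ℝ) → ℝ) (Dstar : ℝ)
    (lbar : Fin m → ℝ) (hlbar : ∀ i, 0 ≤ lbar i)
    (hmax : ∀ l : Fin m → ℝ, (∀ i, 0 ≤ l i) → gbar l ≤ gbar lbar)
    (hD : Dstar = gbar lbar)
    (η S ε : ℝ) (hη : 0 < η)
    (lam : ℕ → Ω → Fin m → ℝ) (fhat : ℕ → Ω → Fin m → ℝ)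
    (hadapted : ∀ h, Measurable[ℱ h] (lam h))
    (hpos : ∀ h ω i, 0 ≤ lam h ω i)
    (hupdate : ∀ h ω i, lam (h + 1) ω i = max 0 (lam h ω i + η * fhat h ω i))
    (hInt : ∀ h i, Integrable (fun ω => fhat h ω i) μ)
    (hInt2 : ∀ h, Integrable (fun ω => ∑ i, fhat h ω i ^ 2) μ)
    (hmom : ∀ h, ∀ᵐ ω ∂μ, (μ[fun ω' => ∑ i, fhat h ω' i ^ 2 | ℱ h]) ω ≤ S ^ 2)
    (hgrad : ∀ h, ∀ᵐ ω ∂μ,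
      (∑ i, (μ[fun ω' => fhat h ω' i | ℱ h]) ω * (lam h ω i - lbar i)) - ε ^ 2
        ≤ gbar (lam h ω) - gbar lbar) :
    ∀ᵐ ω ∂μ,
      ((Dstar - (η * S ^ 2 / 2 + ε ^ 2) : ℝ) : EReal)
        ≤ ⨆ h : ℕ, ((gbar (lam (h + 1) ω) : ℝ) : EReal) := by
  classical
  set ip : ℕ → Ω → ℝ := fun h ω =>
    ∑ i, (μ[fun ω' => fhat h ω' i | ℱ h]) ω * (lam h ω i - lbar i) with hip
  set V : ℕ → Ω → ℝ := fun h ω => ∑ i, (lam h ω i - lbar i) ^ 2 with hVdef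
  have hXm : ∀ h i, Measurable[ℱ h] (fun ω => lam h ω i - lbar i) := fun h i =>
    ((measurable_pi_apply i).comp (hadapted h)).sub_const _
  have hipm : ∀ h, Measurable[ℱ h] (ip h) := fun h =>
    Finset.measurable_sum _ fun i _ => stronglyMeasurable_condExp.measurable.mul (hXm h i)
  have hVm : ∀ h, Measurable[ℱ h] (V h) := fun h =>
    Finset.measurable_sum _ fun i _ => (hXm h i).pow_const 2
  have hV0 : ∀ h ω, 0 ≤ V h ω := fun h ω => Finset.sum_nonneg fun i _ => sq_nonneg _
  have key : ∀ k N : ℕ, μ {ω | V 1 ω ≤ N ∧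
      ∀ j : ℕ, ip (j + 1) ω ≤ -(η * S ^ 2 / 2) - 1 / ((k : ℝ) + 1)} = 0 := by
    intro k N
    set δ : ℝ := 1 / ((k : ℝ) + 1) with hδ
    have hδ0 : 0 < δ := by positivity
    set B := {ω | V 1 ω ≤ N ∧ ∀ j : ℕ, ip (j + 1) ω ≤ -(η * S ^ 2 / 2) - δ} with hB
    set A : ℕ → Set Ω := fun h => {ω | V 1 ω ≤ N ∧
      ∀ j ≤ h, ip (j + 1) ω ≤ -(η * S ^ 2 / 2) - δ} with hAdef
    have hAm : ∀ h, MeasurableSet[ℱ (h + 1)] (A h) := by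
      intro h
      have e : A h = {ω | V 1 ω ≤ N} ∩
          ⋂ j, ⋂ (_ : j ≤ h), {ω | ip (j + 1) ω ≤ -(η * S ^ 2 / 2) - δ} := by
        ext ω; simp [hAdef]
      rw [e]
      refine MeasurableSet.inter ?_ ?_
      · exact ℱ.mono (by omega : 1 ≤ h + 1) _
          (@measurableSet_le _ _ _ _ _ (ℱ 1) _ _ _ _ _ (hVm 1) measurable_const)
      · refine MeasurableSet.iInter fun j => MeasurableSet.iInter fun hj => ?_
        exact ℱ.mono (by omega : j + 1 ≤ h + 1) _
          (@measurableSet_le _ _ _ _ _ (ℱ (j + 1)) _ _ _ _ _ (hipm (j + 1)) measurable_const)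
    have hAanti : ∀ h, A (h + 1) ⊆ A h := fun h ω hω =>
      ⟨hω.1, fun j hj => hω.2 j (by omega)⟩
    have hBA : ∀ h, B ⊆ A h := fun h ω hω => ⟨hω.1, fun j _ => hω.2 j⟩
    have step : ∀ h, IntegrableOn (V (h + 1)) (A h) μ →
        IntegrableOn (V (h + 2)) (A h) μ ∧
        ∫ ω in A h, V (h + 2) ω ∂μ ≤ ∫ ω in A h, V (h + 1) ω ∂μ - 2 * η * δ * μ.real (A h) := by
      intro h hI
      refine aux_step μ (ℱ.le (h + 1)) (fun i ω => lam (h + 1) ω i - lbar i)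
        (fun i ω => fhat (h + 1) ω i) (fun i => (hXm (h + 1) i).stronglyMeasurable) (A h) (hAm h)
        hI (hInt (h + 1)) (hInt2 (h + 1)) η S δ hη (hmom (h + 1)) (fun ω hω => hω.2 h le_rfl)
        (V (h + 2)) ((hVm (h + 2)).mono (ℱ.le _) le_rfl).aestronglyMeasurable (hV0 _) ?_
      intro ω
      refine Finset.sum_le_sum fun i _ => ?_
      rw [hupdate (h + 1) ω i]
      refine (aux_proj _ _ (hlbar i)).trans (le_of_eq ?_)
      ring
    have ind : ∀ h : ℕ, IntegrableOn (V (h + 1)) (A h) μ ∧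
        ∫ ω in A h, V (h + 1) ω ∂μ + h * (2 * η * δ * μ.real B) ≤ ∫ ω in A 0, V 1 ω ∂μ := by
      intro h
      induction h with
      | zero =>
        refine ⟨?_, by simp⟩
        refine (integrableOn_const (C := (N : ℝ)) (measure_ne_top μ (A 0))).mono'
          ((hVm 1).mono (ℱ.le _) le_rfl).aestronglyMeasurable.restrict ?_
        refine (ae_restrict_iff' (ℱ.le _ _ (hAm 0))).2 (ae_of_all _ fun ω hω => ?_)
        rw [Real.norm_eq_abs, abs_of_nonneg (hV0 _ _)]
        exact hω.1
      | succ h ih =>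
        obtain ⟨h1, h2⟩ := step h ih.1
        refine ⟨h1.mono_set (hAanti h), ?_⟩
        have h3 : ∫ ω in A (h + 1), V (h + 2) ω ∂μ ≤ ∫ ω in A h, V (h + 2) ω ∂μ :=
          setIntegral_mono_set h1 (ae_of_all _ (hV0 _)) (hAanti h).eventuallyLE
        have h4 : μ.real B ≤ μ.real (A h) := measureReal_mono (hBA h)
        have h5 := mul_le_mul_of_nonneg_left h4 (by positivity : 0 ≤ 2 * η * δ)
        have h6 := ih.2
        push_cast
        change ∫ ω in A (h + 1), V (h + 2) ω ∂μ + _ ≤ _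
        linarith
    by_contra hne
    have hBpos : 0 < μ.real B := ENNReal.toReal_pos hne (measure_ne_top μ B)
    have hc : 0 < 2 * η * δ * μ.real B := by positivity
    obtain ⟨n, hn⟩ := exists_nat_gt ((∫ ω in A 0, V 1 ω ∂μ) / (2 * η * δ * μ.real B))
    rw [div_lt_iff₀ hc] at hn
    have h1 := (ind n).2
    have h2 : 0 ≤ ∫ ω in A n, V (n + 1) ω ∂μ := integral_nonneg (hV0 _)
    linarith
  have key' : ∀ᵐ ω ∂μ, ∀ k N : ℕ, ¬ (V 1 ω ≤ N ∧
      ∀ j : ℕ, ip (j + 1) ω ≤ -(η * S ^ 2 / 2) - 1 / ((k : ℝ) + 1)) := by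
    rw [ae_all_iff]; intro k
    rw [ae_all_iff]; intro N
    rw [ae_iff]
    simpa only [not_not] using key k N
  filter_upwards [key', ae_all_iff.2 hgrad] with ω h1 h2
  by_contra hlt
  rw [not_le] at hlt
  obtain ⟨q, hq1, hq2⟩ := EReal.lt_iff_exists_real_btwn.1 hlt
  have hq2' : q < Dstar - (η * S ^ 2 / 2 + ε ^ 2) := EReal.coe_lt_coe_iff.1 hq2
  obtain ⟨k, hk⟩ := exists_nat_one_div_lt (sub_pos.2 hq2')
  obtain ⟨N, hN⟩ := exists_nat_ge (V 1 ω)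
  refine h1 k N ⟨hN, fun j => ?_⟩
  have h3 : gbar (lam (j + 1) ω) < q := EReal.coe_lt_coe_iff.1
    ((le_iSup (fun h : ℕ => ((gbar (lam (h + 1) ω) : ℝ) : EReal)) j).trans_lt hq1)
  have h4 : ip (j + 1) ω - ε ^ 2 ≤ gbar (lam (j + 1) ω) - gbar lbar := h2 (j + 1)
  linarith
end

section
/- Let g, ḡ : ℝ₊ᵐ → ℝ with g(λ) ≤ ḡ(λ) ≤ g(λ) + 4R(1 + ‖λ‖₁)ν for all λ ∈ ℝ₊ᵐ, where R, ν ≥ 0. Let λ* ∈ ℝ₊ᵐ maximize g over ℝ₊ᵐ, with the first-order optimality condition ∇g(λ*)ᵀ(λ − λ*) ≤ 0 for all λ ∈ ℝ₊ᵐ. Let λ_b ∈ ℝ₊ᵐ satisfy ḡ(λ_b) ≥ sup_{λ ∈ ℝ₊ᵐ} ḡ(λ) − e for some e ≥ 0, and suppose g is differentiable and μ-strongly concave (μ > 0) on the segment joining λ* and λ_b. Then ‖λ_b − λ*‖² ≤ (2/μ)(e + 4R(1 + ‖λ_b‖₁)ν). -/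
/-- let `g ≤ ḡ ≤ g + 4R(1 + ‖·‖₁)ν` on `ℝ₊ᵐ`, let `λ*` maximize `g` over
`ℝ₊ᵐ` with first-order optimality `∇g(λ*)ᵀ(λ − λ*) ≤ 0` for all `λ ≥ 0`, and let
`λ_b ∈ ℝ₊ᵐ` be `e`-suboptimal for `ḡ` (i.e. `ḡ(λ_b) ≥ sup_{λ ≥ 0} ḡ(λ) − e`).  If `g`
is differentiable (with gradient `Dg`) and `μ`-strongly concave on the segment joining
`λ*` and `λ_b`, then `‖λ_b − λ*‖² ≤ (2/μ)(e + 4R(1 + ‖λ_b‖₁)ν)`. -/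
theorem stmt19 {m : ℕ} (g gbar : (Fin m → ℝ) → ℝ) (R ν μ e : ℝ)
    (hR : 0 ≤ R) (hν : 0 ≤ ν) (hμ : 0 < μ) (he : 0 ≤ e)
    (hgap : ∀ l : Fin m → ℝ, (∀ i, 0 ≤ l i) →
      g l ≤ gbar l ∧ gbar l ≤ g l + 4 * R * (1 + ∑ i, |l i|) * ν)
    (lstar lb : Fin m → ℝ) (hlstar : ∀ i, 0 ≤ lstar i) (hlb : ∀ i, 0 ≤ lb i)
    (hmaxg : ∀ l : Fin m → ℝ, (∀ i, 0 ≤ l i) → g l ≤ g lstar)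
    (hsubopt : ∀ l : Fin m → ℝ, (∀ i, 0 ≤ l i) → gbar l - e ≤ gbar lb)
    (Dg : (Fin m → ℝ) → (Fin m → ℝ))
    (hdiff : ∀ l ∈ segment ℝ lstar lb,
      HasFDerivAt g (∑ i, Dg l i • (ContinuousLinearMap.proj i : (Fin m → ℝ) →L[ℝ] ℝ)) l)
    (hconc : ∀ l1 ∈ segment ℝ lstar lb, ∀ l2 ∈ segment ℝ lstar lb,
      g l2 ≤ g l1 + ∑ i, Dg l1 i * (l2 i - l1 i) - μ / 2 * ∑ i, (l2 i - l1 i) ^ 2)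
    (hfoc : ∀ l : Fin m → ℝ, (∀ i, 0 ≤ l i) → ∑ i, Dg lstar i * (l i - lstar i) ≤ 0) :
    ∑ i, (lb i - lstar i) ^ 2 ≤ (2 / μ) * (e + 4 * R * (1 + ∑ i, |lb i|) * ν) := by
  have h1 := hconc lstar (left_mem_segment ℝ lstar lb) lb (right_mem_segment ℝ lstar lb)
  have h2 := hfoc lb hlb
  have h3 := (hgap lb hlb).2
  have h4 := (hgap lstar hlstar).1
  have h5 := hsubopt lstar hlstar
  rw [div_mul_eq_mul_div, le_div_iff₀ hμ]
  linarith
end
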